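/- Assume (Φ1), (Φ2), (Φ3), the symmetry a(x,y,t) = a(y,x,t), the growth conditions (f₁): |f(x,t)| ≤ c₁|t|^{q(x)−1} and (f₂): F(x,t) ≥ c₂|t|^{q(x)} with constants c₁, c₂ > 0, and q⁺ < φ⁻. Assume the continuous embedding: there is c > 0 with ‖u‖_{q(·)} ≤ c·‖u‖ for all u ∈ X; the compact embedding: every sequence (u_n) ⊂ X with sup_n ‖u_n‖ < ∞ admits a subsequence (u_{n_k}) and u ∈ X with ∫_Ω |u_{n_k}(x) − u(x)|^{q(x)} dx → 0; and that the indicator function χ_Ω of Ω belongs to X. Then there exists λ^* > 0 such that for every λ ≥ λ^* there is u ∈ X with u not almost everywhere 0, J_λ(u) < 0, and A_s(u,v) = λ·∫_Ω f(x,u(x))·v(x) dx for every v ∈ X (i.e., u is a nontrivial weak solution of the Neumann–Robin problem (𝒫_a)). -/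

import Mathlib

open MeasureTheory Set Filter
open scoped ENNReal

noncomputable section

abbrev Eucl (N : ℕ) := EuclideanSpace ℝ (Fin N)

variable {N : ℕ}

/-- `Q = ℝ^{2N} \ (CΩ)^2`. -/
def Qset (Ω : Set (Eucl N)) : Set (Eucl N × Eucl N) := (Ωᶜ ×ˢ Ωᶜ)ᶜ

/-- `φ_{x,y}(t) = a(x,y,|t|) t` for `t ≠ 0`, `φ_{x,y}(0) = 0`. -/
def phiF (a : Eucl N → Eucl N → ℝ → ℝ) (x y : Eucl N) (t : ℝ) : ℝ :=
  if t = 0 then 0 else a x y |t| * t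

/-- `Φ_{x,y}(t) = ∫₀ᵗ φ_{x,y}(τ) dτ`. -/
def PhiF (a : Eucl N → Eucl N → ℝ → ℝ) (x y : Eucl N) (t : ℝ) : ℝ :=
  ∫ τ in (0:ℝ)..t, phiF a x y τ

/-- Gagliardo-type modular on `Q` at scale `lam`. -/
def modQ (a : Eucl N → Eucl N → ℝ → ℝ) (s : ℝ) (Ω : Set (Eucl N))
    (u : Eucl N → ℝ) (lam : ℝ) : ℝ≥0∞ :=
  ∫⁻ p in Qset Ω, ENNReal.ofReal
    (PhiF a p.1 p.2 (|u p.1 - u p.2| / (lam * dist p.1 p.2 ^ s)) / dist p.1 p.2 ^ (N : ℝ))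

/-- Gagliardo-type modular on `Ω × Ω` at scale `lam`. -/
def modOO (a : Eucl N → Eucl N → ℝ → ℝ) (s : ℝ) (Ω : Set (Eucl N))
    (u : Eucl N → ℝ) (lam : ℝ) : ℝ≥0∞ :=
  ∫⁻ p in Ω ×ˢ Ω, ENNReal.ofReal
    (PhiF a p.1 p.2 (|u p.1 - u p.2| / (lam * dist p.1 p.2 ^ s)) / dist p.1 p.2 ^ (N : ℝ))

/-- modular `∫_Ω Φ̂_x(|u|/λ)`. -/
def modO (a : Eucl N → Eucl N → ℝ → ℝ) (Ω : Set (Eucl N))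
    (u : Eucl N → ℝ) (lam : ℝ) : ℝ≥0∞ :=
  ∫⁻ x in Ω, ENNReal.ofReal (PhiF a x x (|u x| / lam))

/-- modular `∫_{CΩ} β Φ̂_x(|u|/λ)`. -/
def modB (a : Eucl N → Eucl N → ℝ → ℝ) (Ω : Set (Eucl N)) (β : Eucl N → ℝ)
    (u : Eucl N → ℝ) (lam : ℝ) : ℝ≥0∞ :=
  ∫⁻ x in Ωᶜ, ENNReal.ofReal (β x * PhiF a x x (|u x| / lam))

/-- Luxemburg infimum of a modular family (`∞` if no admissible `λ`). -/
def lux (m : ℝ → ℝ≥0∞) : ℝ≥0∞ :=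
  sInf {l : ℝ≥0∞ | ∃ lam : ℝ, 0 < lam ∧ l = ENNReal.ofReal lam ∧ m lam ≤ 1}

/-- `‖u‖_X = [u]_{s,Φ,Q} + ‖u‖_{Φ̂} + ‖u‖_{Φ̂,β,CΩ}`. -/
def normX (a : Eucl N → Eucl N → ℝ → ℝ) (s : ℝ) (Ω : Set (Eucl N)) (β : Eucl N → ℝ)
    (u : Eucl N → ℝ) : ℝ≥0∞ :=
  lux (modQ a s Ω u) + lux (modO a Ω u) + lux (modB a Ω β u)

/-- the modular `ρ_s`. -/
def rhoS (a : Eucl N → Eucl N → ℝ → ℝ) (s : ℝ) (Ω : Set (Eucl N)) (β : Eucl N → ℝ)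
    (u : Eucl N → ℝ) : ℝ≥0∞ :=
  modQ a s Ω u 1 + modO a Ω u 1 + modB a Ω β u 1

/-- the modular norm `‖u‖ = inf {λ > 0 : ρ_s(u/λ) ≤ 1}`. -/
def normM (a : Eucl N → Eucl N → ℝ → ℝ) (s : ℝ) (Ω : Set (Eucl N)) (β : Eucl N → ℝ)
    (u : Eucl N → ℝ) : ℝ≥0∞ :=
  sInf {l : ℝ≥0∞ | ∃ lam : ℝ, 0 < lam ∧ l = ENNReal.ofReal lam ∧
    rhoS a s Ω β (fun x => u x / lam) ≤ 1}

/-- `X` described via the norm `‖·‖_X`. -/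
def XsetX (a : Eucl N → Eucl N → ℝ → ℝ) (s : ℝ) (Ω : Set (Eucl N)) (β : Eucl N → ℝ) :
    Set (Eucl N → ℝ) :=
  {u | Measurable u ∧ normX a s Ω β u < ⊤}

/-- `X` described via the modular norm `‖·‖`. -/
def XsetM (a : Eucl N → Eucl N → ℝ → ℝ) (s : ℝ) (Ω : Set (Eucl N)) (β : Eucl N → ℝ) :
    Set (Eucl N → ℝ) :=
  {u | Measurable u ∧ (∃ lam : ℝ, 0 < lam ∧ rhoS a s Ω β (fun x => u x / lam) < ⊤) ∧
    normM a s Ω β u < ⊤}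

/-- the fractional difference quotient `D^s u`. -/
def Du (s : ℝ) (u : Eucl N → ℝ) (p : Eucl N × Eucl N) : ℝ :=
  (u p.1 - u p.2) / dist p.1 p.2 ^ s

/-- `a(x,y,|D^s u|) D^s u`, with the convention that it vanishes when `u x = u y`. -/
def Ku (a : Eucl N → Eucl N → ℝ → ℝ) (s : ℝ) (u : Eucl N → ℝ) (p : Eucl N × Eucl N) : ℝ :=
  if u p.1 = u p.2 then 0 else a p.1 p.2 |Du s u p| * Du s u p

/-- the form `A_s(u,v)`. -/
def Aform (a : Eucl N → Eucl N → ℝ → ℝ) (s : ℝ) (Ω : Set (Eucl N)) (β : Eucl N → ℝ)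
    (u v : Eucl N → ℝ) : ℝ :=
  (1/2) * (∫ p in Qset Ω, Ku a s u p * Du s v p / dist p.1 p.2 ^ (N : ℝ))
  + (∫ x in Ω, a x x |u x| * u x * v x)
  + ∫ x in Ωᶜ, β x * (a x x |u x| * u x * v x)

/-- the nonlocal normal derivative `𝒩^s_a u` on `CΩ`. -/
def Nop (a : Eucl N → Eucl N → ℝ → ℝ) (s : ℝ) (Ω : Set (Eucl N)) (u : Eucl N → ℝ)
    (x : Eucl N) : ℝ :=
  ∫ y in Ω, Ku a s u (x, y) / dist x y ^ ((N : ℝ) + s)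

/-- `F(x,t) = ∫₀ᵗ f(x,τ) dτ`. -/
def Ff (f : Eucl N → ℝ → ℝ) (x : Eucl N) (t : ℝ) : ℝ := ∫ τ in (0:ℝ)..t, f x τ

/-- the energy functional `J_λ`. -/
def Jlam (a : Eucl N → Eucl N → ℝ → ℝ) (s : ℝ) (Ω : Set (Eucl N)) (β : Eucl N → ℝ)
    (f : Eucl N → ℝ → ℝ) (lam : ℝ) (u : Eucl N → ℝ) : ℝ :=
  (1/2) * (modQ a s Ω u 1).toReal + (modO a Ω u 1).toReal + (modB a Ω β u 1).toReal
    - lam * ∫ x in Ω, Ff f x (u x)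

/-- the variable-exponent Luxemburg norm `‖u‖_{q(·)}` on `Ω`. -/
def normq (Ω : Set (Eucl N)) (q : Eucl N → ℝ) (u : Eucl N → ℝ) : ℝ≥0∞ :=
  sInf {l : ℝ≥0∞ | ∃ lam : ℝ, 0 < lam ∧ l = ENNReal.ofReal lam ∧
    (∫⁻ x in Ω, ENNReal.ofReal (|u x / lam| ^ q x)) ≤ 1}

/-!
All three parts of `J_λ` form one modular, over pairs and points, of the linear image
`u ↦ (D^s u, u)`. By (Φ2) this modular satisfies the Clarkson inequality of a Hilbert norm, so
convex combinations of the tails of a minimizing sequence whose modulars are nearly minimal are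
Cauchy in modular. A subsequence converges almost everywhere, and Fatou's lemma takes the place of
weak compactness and weak lower semicontinuity. The term `∫ F(x, u)` is continuous along the
sequence by the compact embedding, and `J_λ` is coercive because `q⁺ < φ⁻`; hence it has a
minimizer, which is nontrivial once `λ` is so large that `J_λ` is negative somewhere.
Differentiation under the integral sign gives the Euler equation.
-/

open Topology

section YoungFunctions

variable {G g : ℝ → ℝ} {m p : ℝ}

/-- The logarithmic derivative of `x ↦ G (x t)` is at least `m / x`, so `x ^ (-m) * G (x t)` is
nondecreasing. -/
lemma rpow_mul_le_comp_mul (hG : ∀ t, HasDerivAt G (g t) t) (hm : ∀ t, m * G t ≤ t * g t)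
    {K : ℝ} (hK : 1 ≤ K) (t : ℝ) : K ^ m * G t ≤ G (K * t) := by
  have hderiv : ∀ x : ℝ, 0 < x → HasDerivAt (fun x => x ^ (-m) * G (x * t))
      (x ^ (-m - 1) * (x * t * g (x * t) - m * G (x * t))) x := by
    intro x hx
    have hpow : x ^ (-m) = x ^ (-m - 1) * x := by
      rw [← Real.rpow_add_one hx.ne', sub_add_cancel]
    refine ((Real.hasDerivAt_rpow_const (p := -m) (Or.inl hx.ne')).mul
      ((hG (x * t)).comp x (hasDerivAt_mul_const t))).congr_deriv ?_
    rw [hpow, Function.comp_apply]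
    ring
  have hpos : ∀ x ∈ Ici (1 : ℝ), 0 < x := fun x hx => one_pos.trans_le hx
  have hmono : MonotoneOn (fun x : ℝ => x ^ (-m) * G (x * t)) (Ici 1) := by
    refine monotoneOn_of_deriv_nonneg (convex_Ici 1)
      (fun x hx => (hderiv x (hpos x hx)).continuousAt.continuousWithinAt)
      (fun x hx => (hderiv x (hpos x (interior_subset hx))).differentiableAt
        |>.differentiableWithinAt) fun x hx => ?_
    have hx0 := hpos x (interior_subset hx)
    rw [(hderiv x hx0).deriv]
    exact mul_nonneg (Real.rpow_nonneg hx0.le _) (sub_nonneg.2 (hm _))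
  have hK0 : 0 < K := one_pos.trans_le hK
  simpa only [Real.one_rpow, one_mul, Real.rpow_neg hK0.le,
    le_inv_mul_iff₀ (Real.rpow_pos_of_pos hK0 m)] using hmono self_mem_Ici hK hK

lemma comp_mul_le_rpow_mul (hG : ∀ t, HasDerivAt G (g t) t) (hp : ∀ t, t * g t ≤ p * G t)
    {K : ℝ} (hK : 1 ≤ K) (t : ℝ) : G (K * t) ≤ K ^ p * G t := by
  simpa using rpow_mul_le_comp_mul (G := fun t => -G t) (g := fun t => -g t)
    (fun t => (hG t).neg) (fun t => by simpa using hp t) hK t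

lemma map_add_le_of_convexOn {H : ℝ → ℝ} (hH : ConvexOn ℝ (Ici 0) H) (hH0 : H 0 = 0) {r t : ℝ}
    (hr : 0 ≤ r) (ht : 0 ≤ t) : H r + H t ≤ H (r + t) := by
  rcases (add_nonneg hr ht).eq_or_lt with h | h
  · obtain ⟨rfl, rfl⟩ := (add_eq_zero_iff_of_nonneg hr ht).1 h.symm
    simp [hH0]
  have chord : ∀ b ∈ Icc 0 (r + t), H b ≤ b / (r + t) * H (r + t) := by
    intro b hb
    have hsub : 0 ≤ 1 - b / (r + t) := sub_nonneg.2 ((div_le_one h).2 hb.2)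
    simpa [hH0, div_mul_cancel₀ _ h.ne'] using
      hH.2 h.le (le_refl (0 : ℝ)) (div_nonneg hb.1 h.le) hsub (add_sub_cancel _ _)
  calc H r + H t ≤ r / (r + t) * H (r + t) + t / (r + t) * H (r + t) :=
        add_le_add (chord r ⟨hr, by linarith⟩) (chord t ⟨ht, by linarith⟩)
    _ = H (r + t) := by field_simp

/-- `G` is an even Young function with derivative `g` whose growth is pinched between the powers
`m` and `p`, and `t ↦ G √t` is convex: the conditions (Φ1) and (Φ2) for a fixed pair of points. -/
structure IsYoungFunction (G g : ℝ → ℝ) (m p : ℝ) : Prop where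
  hasDerivAt : ∀ t, HasDerivAt G (g t) t
  strictMono_deriv : StrictMono g
  odd_deriv : g.Odd
  map_zero : G 0 = 0
  lower_of_pos : ∀ t, 0 < t → m * G t ≤ t * g t
  upper_of_pos : ∀ t, 0 < t → t * g t ≤ p * G t
  convexOn_sqrt : ConvexOn ℝ (Ici 0) fun t => G √t

namespace IsYoungFunction

lemma continuous (h : IsYoungFunction G g m p) : Continuous G :=
  continuous_iff_continuousAt.2 fun t => (h.hasDerivAt t).continuousAt

lemma deriv_zero (h : IsYoungFunction G g m p) : g 0 = 0 := h.odd_deriv.map_zero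

lemma even (h : IsYoungFunction G g m p) (t : ℝ) : G (-t) = G t := by
  have hderiv : ∀ t, HasDerivAt (fun t => G (-t) - G t) 0 t := fun t =>
    (((h.hasDerivAt (-t)).comp t (hasDerivAt_neg t)).sub (h.hasDerivAt t)).congr_deriv
      (by simp [h.odd_deriv t])
  simpa [sub_eq_zero] using is_const_of_deriv_eq_zero
    (fun t => (hderiv t).differentiableAt) (fun t => (hderiv t).deriv) t 0

lemma apply_abs (h : IsYoungFunction G g m p) (t : ℝ) : G |t| = G t := by
  rcases abs_choice t with ht | ht <;> simp only [ht, h.even]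

lemma abs_deriv (h : IsYoungFunction G g m p) (t : ℝ) : |g t| = g |t| := by
  rcases le_total 0 t with ht | ht
  · rw [abs_of_nonneg ht, abs_of_nonneg (h.deriv_zero ▸ h.strictMono_deriv.monotone ht)]
  · rw [abs_of_nonpos ht, h.odd_deriv,
      abs_of_nonpos (h.deriv_zero ▸ h.strictMono_deriv.monotone ht)]

lemma strictMonoOn (h : IsYoungFunction G g m p) : StrictMonoOn G (Ici 0) := by
  refine strictMonoOn_of_deriv_pos (convex_Ici 0) h.continuous.continuousOn fun t ht => ?_
  rw [interior_Ici] at ht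
  rw [(h.hasDerivAt t).deriv, ← h.deriv_zero]
  exact h.strictMono_deriv ht

lemma pos_of_pos (h : IsYoungFunction G g m p) {t : ℝ} (ht : 0 < t) : 0 < G t :=
  h.map_zero ▸ h.strictMonoOn self_mem_Ici ht.le ht

lemma le_of_abs_le_abs (h : IsYoungFunction G g m p) {a b : ℝ} (hab : |a| ≤ |b|) :
    G a ≤ G b := by
  rw [← h.apply_abs a, ← h.apply_abs b]
  exact h.strictMonoOn.monotoneOn (abs_nonneg a) (abs_nonneg b) hab

lemma nonneg (h : IsYoungFunction G g m p) (t : ℝ) : 0 ≤ G t :=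
  h.map_zero ▸ h.le_of_abs_le_abs (by simp)

lemma exponent_pos (h : IsYoungFunction G g m p) : 0 < p := by
  have hg : 0 < g 1 := h.deriv_zero ▸ h.strictMono_deriv one_pos
  refine pos_of_mul_pos_left (hg.trans_le ?_) (h.nonneg 1)
  simpa using h.upper_of_pos 1 one_pos

lemma lower (h : IsYoungFunction G g m p) (t : ℝ) : m * G t ≤ t * g t := by
  rcases lt_trichotomy t 0 with ht | rfl | ht
  · simpa [h.even, h.odd_deriv t] using h.lower_of_pos (-t) (neg_pos.2 ht)
  · simp [h.map_zero]
  · exact h.lower_of_pos t ht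

lemma upper (h : IsYoungFunction G g m p) (t : ℝ) : t * g t ≤ p * G t := by
  rcases lt_trichotomy t 0 with ht | rfl | ht
  · simpa [h.even, h.odd_deriv t] using h.upper_of_pos (-t) (neg_pos.2 ht)
  · simp [h.map_zero]
  · exact h.upper_of_pos t ht

lemma rpow_mul_le (h : IsYoungFunction G g m p) {K : ℝ} (hK : 1 ≤ K) (t : ℝ) :
    K ^ m * G t ≤ G (K * t) :=
  rpow_mul_le_comp_mul h.hasDerivAt h.lower hK t

lemma le_rpow_mul (h : IsYoungFunction G g m p) {K : ℝ} (hK : 1 ≤ K) (t : ℝ) :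
    G (K * t) ≤ K ^ p * G t :=
  comp_mul_le_rpow_mul h.hasDerivAt h.upper hK t

lemma mul_le_rpow_mul (h : IsYoungFunction G g m p) {K c : ℝ} (hK : 1 ≤ K) (hc : |c| ≤ K)
    (t : ℝ) : G (c * t) ≤ K ^ p * G t :=
  (h.le_of_abs_le_abs (by
    rw [abs_mul, abs_mul]
    exact mul_le_mul_of_nonneg_right (hc.trans (le_abs_self K)) (abs_nonneg t))).trans
    (h.le_rpow_mul hK t)

lemma abs_add_abs_le (h : IsYoungFunction G g m p) (a b : ℝ) :
    G (|a| + |b|) ≤ 2 ^ p * (G a + G b) := by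
  wlog hab : |a| ≤ |b| generalizing a b
  · simpa only [add_comm] using this b a (le_of_not_ge hab)
  calc G (|a| + |b|) ≤ G (2 * b) := h.le_of_abs_le_abs (by
        rw [abs_of_nonneg (by positivity), abs_mul, abs_two]; linarith)
    _ ≤ 2 ^ p * G b := h.le_rpow_mul one_le_two b
    _ ≤ 2 ^ p * (G a + G b) := by gcongr; linarith [h.nonneg a]

lemma add_le (h : IsYoungFunction G g m p) (a b : ℝ) : G (a + b) ≤ 2 ^ p * (G a + G b) :=
  (h.le_of_abs_le_abs ((abs_add_le a b).trans (le_abs_self _))).trans (h.abs_add_abs_le a b)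

/-- Convexity of `G ∘ √` makes `G ∘ √` superadditive; apply this to the parallelogram identity
`((a + b) / 2) ^ 2 + ((a - b) / 2) ^ 2 = (a ^ 2 + b ^ 2) / 2`. -/
lemma clarkson (h : IsYoungFunction G g m p) (a b : ℝ) :
    G ((a + b) / 2) + G ((a - b) / 2) ≤ (G a + G b) / 2 := by
  have hsqrt : ∀ t, G √(t ^ 2) = G t := fun t => by rw [Real.sqrt_sq_eq_abs, h.apply_abs]
  have hadd := map_add_le_of_convexOn h.convexOn_sqrt (by simp [h.map_zero])
    (sq_nonneg ((a + b) / 2)) (sq_nonneg ((a - b) / 2))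
  have hmid := h.convexOn_sqrt.2 (sq_nonneg a) (sq_nonneg b)
    (one_half_pos (α := ℝ)).le one_half_pos.le (add_halves 1)
  have parallelogram : ((a + b) / 2) ^ 2 + ((a - b) / 2) ^ 2
      = (1 / 2 : ℝ) • a ^ 2 + (1 / 2 : ℝ) • b ^ 2 := by
    simp only [smul_eq_mul]
    ring
  rw [parallelogram] at hadd
  simp only [hsqrt] at hadd hmid
  calc _ ≤ _ := hadd.trans hmid
    _ = (G a + G b) / 2 := by simp only [smul_eq_mul]; ring

lemma abs_deriv_add_mul_mul_le (h : IsYoungFunction G g m p) (w k : ℝ) {t : ℝ} (ht : |t| ≤ 1) :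
    |g (w + t * k) * k| ≤ p * 2 ^ p * (G w + G k) := by
  have habs : |w + t * k| ≤ |w| + |k| := (abs_add_le _ _).trans <| by
    rw [abs_mul]
    gcongr
    exact mul_le_of_le_one_left (abs_nonneg k) ht
  have hg : 0 ≤ g (|w| + |k|) :=
    h.deriv_zero ▸ h.strictMono_deriv.monotone (add_nonneg (abs_nonneg w) (abs_nonneg k))
  calc |g (w + t * k) * k| = g |w + t * k| * |k| := by rw [abs_mul, h.abs_deriv]
    _ ≤ g (|w| + |k|) * (|w| + |k|) := by
        gcongr
        · exact h.strictMono_deriv.monotone habs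
        · exact le_add_of_nonneg_left (abs_nonneg w)
    _ ≤ p * G (|w| + |k|) := by rw [mul_comm]; exact h.upper _
    _ ≤ p * (2 ^ p * (G w + G k)) :=
        mul_le_mul_of_nonneg_left (h.abs_add_abs_le w k) h.exponent_pos.le
    _ = p * 2 ^ p * (G w + G k) := (mul_assoc _ _ _).symm

end IsYoungFunction

lemma isYoungFunction_PhiF (a : Eucl N → Eucl N → ℝ → ℝ) (x y : Eucl N)
    (hmono : StrictMono (phiF a x y)) (hcont : Continuous (phiF a x y))
    (hΦ1 : ∀ t, 0 < t →
      m ≤ t * phiF a x y t / PhiF a x y t ∧ t * phiF a x y t / PhiF a x y t ≤ p)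
    (hΦ2 : ConvexOn ℝ (Ici 0) fun t => PhiF a x y √t) :
    IsYoungFunction (PhiF a x y) (phiF a x y) m p := by
  have hpos : ∀ t, 0 < t → 0 < PhiF a x y t := fun t ht =>
    intervalIntegral.intervalIntegral_pos_of_pos_on (hcont.intervalIntegrable _ _)
      (fun τ hτ => by simpa [phiF] using hmono hτ.1) ht
  exact
    { hasDerivAt := fun t => hcont.integral_hasStrictDerivAt 0 t |>.hasDerivAt
      strictMono_deriv := hmono
      odd_deriv := fun t => by by_cases ht : t = 0 <;> simp [phiF, ht]
      map_zero := by simp [PhiF]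
      lower_of_pos := fun t ht => (le_div_iff₀ (hpos t ht)).1 (hΦ1 t ht).1
      upper_of_pos := fun t ht => (div_le_iff₀ (hpos t ht)).1 (hΦ1 t ht).2
      convexOn_sqrt := hΦ2 }

end YoungFunctions

section Integration

variable {α : Type*} [MeasurableSpace α] {μ : Measure α}

lemma ae_tendsto_zero_and_exists_bound_of_summable_integral {g : ℕ → α → ℝ}
    (hg : ∀ k, Integrable (g k) μ) (hg0 : ∀ k x, 0 ≤ g k x)
    (hsum : Summable fun k => ∫ x, g k x ∂μ) :
    (∀ᵐ x ∂μ, Tendsto (fun k => g k x) atTop (𝓝 0)) ∧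
      ∃ h : α → ℝ, Integrable h μ ∧ ∀ᵐ x ∂μ, ∀ k, g k x ≤ h x := by
  set S : α → ℝ≥0∞ := fun x => ∑' k, ENNReal.ofReal (g k x)
  have hmeas : ∀ k, AEMeasurable (fun x => ENNReal.ofReal (g k x)) μ :=
    fun k => (hg k).aemeasurable.ennreal_ofReal
  have hS : ∫⁻ x, S x ∂μ ≠ ⊤ := by
    calc ∫⁻ x, S x ∂μ = ∑' k, ENNReal.ofReal (∫ x, g k x ∂μ) := by
          rw [lintegral_tsum hmeas]
          exact tsum_congr fun k =>
            (ofReal_integral_eq_lintegral_ofReal (hg k) (ae_of_all _ (hg0 k))).symm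
      _ ≠ ⊤ := hsum.tsum_ofReal_ne_top
  have hSmeas : AEMeasurable S μ := AEMeasurable.tsum hmeas
  have hfin : ∀ᵐ x ∂μ, S x < ⊤ := ae_lt_top' hSmeas hS
  refine ⟨?_, fun x => (S x).toReal, integrable_toReal_of_lintegral_ne_top hSmeas hS, ?_⟩
  · filter_upwards [hfin] with x hx
    simpa only [Function.comp_def, ENNReal.toReal_ofReal (hg0 _ x), ENNReal.toReal_zero] using
      (ENNReal.tendsto_toReal ENNReal.zero_ne_top).comp
        (ENNReal.tendsto_atTop_zero_of_tsum_ne_top hx.ne)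
  · filter_upwards [hfin] with x hx k
    exact (ENNReal.ofReal_le_iff_le_toReal hx.ne).1 (ENNReal.le_tsum k)

lemma integrable_and_integral_le_of_ae_tendsto {F : ℕ → α → ℝ} {f : α → ℝ} {r : ℕ → ℝ} {r₀ : ℝ}
    (hF : ∀ n, Integrable (F n) μ) (hF0 : ∀ n x, 0 ≤ F n x)
    (hlim : ∀ᵐ x ∂μ, Tendsto (fun n => F n x) atTop (𝓝 (f x)))
    (hle : ∀ n, ∫ x, F n x ∂μ ≤ r n) (hr : Tendsto r atTop (𝓝 r₀)) :
    Integrable f μ ∧ ∫ x, f x ∂μ ≤ r₀ := by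
  have hf0 : 0 ≤ᵐ[μ] f := by
    filter_upwards [hlim] with x hx using ge_of_tendsto' hx fun n => hF0 n x
  have hfmeas : AEStronglyMeasurable f μ :=
    aestronglyMeasurable_of_tendsto_ae atTop (fun n => (hF n).aestronglyMeasurable) hlim
  have hr₀ : 0 ≤ r₀ := ge_of_tendsto' hr fun n => (integral_nonneg (hF0 n)).trans (hle n)
  have fatou : ∫⁻ x, ENNReal.ofReal (f x) ∂μ ≤ ENNReal.ofReal r₀ := by
    calc ∫⁻ x, ENNReal.ofReal (f x) ∂μ
        = ∫⁻ x, liminf (fun n => ENNReal.ofReal (F n x)) atTop ∂μ := by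
          refine lintegral_congr_ae ?_
          filter_upwards [hlim] with x hx using (ENNReal.tendsto_ofReal hx).liminf_eq.symm
      _ ≤ liminf (fun n => ∫⁻ x, ENNReal.ofReal (F n x) ∂μ) atTop :=
          lintegral_liminf_le' fun n => (hF n).aemeasurable.ennreal_ofReal
      _ ≤ liminf (fun n => ENNReal.ofReal (r n)) atTop := by
          refine liminf_le_liminf (Eventually.of_forall fun n => ?_)
          rw [← ofReal_integral_eq_lintegral_ofReal (hF n) (ae_of_all _ (hF0 n))]
          exact ENNReal.ofReal_le_ofReal (hle n)
      _ = ENNReal.ofReal r₀ := (ENNReal.tendsto_ofReal hr).liminf_eq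
  have hf : Integrable f μ :=
    ⟨hfmeas, (hasFiniteIntegral_iff_ofReal hf0).2 (fatou.trans_lt ENNReal.ofReal_lt_top)⟩
  refine ⟨hf, (ENNReal.ofReal_le_ofReal_iff hr₀).1 ?_⟩
  rwa [ofReal_integral_eq_lintegral_ofReal hf hf0]

lemma hasDerivAt_integral_add_mul {G g : α → ℝ → ℝ} {w k bound : α → ℝ}
    (hderiv : ∀ x t, HasDerivAt (G x) (g x t) t)
    (hG : ∀ t : ℝ, AEStronglyMeasurable (fun x => G x (w x + t * k x)) μ)
    (hg : AEStronglyMeasurable (fun x => g x (w x) * k x) μ)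
    (hGw : Integrable (fun x => G x (w x)) μ) (hbound : Integrable bound μ)
    (hle : ∀ᵐ x ∂μ, ∀ t : ℝ, |t| ≤ 1 → |g x (w x + t * k x) * k x| ≤ bound x) :
    Integrable (fun x => g x (w x) * k x) μ ∧
      HasDerivAt (fun t => ∫ x, G x (w x + t * k x) ∂μ) (∫ x, g x (w x) * k x ∂μ) 0 := by
  simpa using hasDerivAt_integral_of_dominated_loc_of_deriv_le (μ := μ) (x₀ := (0 : ℝ))
    (F := fun t x => G x (w x + t * k x)) (F' := fun t x => g x (w x + t * k x) * k x)
    (bound := bound) (Metric.ball_mem_nhds _ one_pos) (Eventually.of_forall hG) (by simpa using hGw)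
    (by simpa using hg)
    (hle.mono fun x hx t ht => hx t (by simpa using (Metric.mem_ball.1 ht).le))
    hbound
    (ae_of_all _ fun x t _ => (hderiv x _).comp t (by
      simpa using (hasDerivAt_mul_const (x := t) (k x)).const_add (w x)))

lemma measurable_uncurry_of_continuous {h : α → ℝ → ℝ} (hcont : ∀ x, Continuous (h x))
    (hmeas : ∀ t, Measurable fun x => h x t) : Measurable (Function.uncurry h) :=
  (measurable_uncurry_of_continuous_of_measurable (u := fun t x => h x t) hcont hmeas).comp
    measurable_swap

lemma measurable_uncurry_primitive {h : α → ℝ → ℝ} (hcont : ∀ x, Continuous (h x))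
    (hmeas : Measurable (Function.uncurry h)) :
    Measurable (Function.uncurry fun x t => ∫ τ in (0 : ℝ)..t, h x τ) := by
  refine measurable_uncurry_of_continuous (fun x =>
    intervalIntegral.continuous_primitive (fun _ _ => (hcont x).intervalIntegrable _ _) 0)
    fun t => ?_
  exact hmeas.stronglyMeasurable.integral_prod_right.measurable.sub
    hmeas.stronglyMeasurable.integral_prod_right.measurable

lemma measurable_apply_of_uncurry {h : α → ℝ → ℝ} (hh : Measurable (Function.uncurry h)) {u : α → ℝ}
    (hu : Measurable u) : Measurable fun x => h x (u x) :=
  hh.comp (measurable_id.prodMk hu)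

end Integration

/-- A Carathéodory family of Young functions `G z` with derivatives `g z` and common growth
exponents. -/
structure IsMusielakOrlicz {Z : Type*} [MeasurableSpace Z] (G g : Z → ℝ → ℝ) (m p : ℝ) :
    Prop where
  young : ∀ z, IsYoungFunction (G z) (g z) m p
  measurable : Measurable (Function.uncurry G)
  measurable_deriv : Measurable (Function.uncurry g)

/-- The modular `∫ G z (w z) dμ` of a generalized Young function; junk value `0` where the
integrand is not integrable. -/
def modular {Z : Type*} [MeasurableSpace Z] (μ : Measure Z) (G : Z → ℝ → ℝ) (w : Z → ℝ) : ℝ :=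
  ∫ z, G z (w z) ∂μ

namespace IsMusielakOrlicz

variable {Z : Type*} [MeasurableSpace Z] {μ : Measure Z} {G g : Z → ℝ → ℝ} {m p : ℝ}

lemma modular_nonneg (hG : IsMusielakOrlicz G g m p) (w : Z → ℝ) : 0 ≤ modular μ G w :=
  integral_nonneg fun z => (hG.young z).nonneg _

/-- The Musielak–Orlicz class of measurable functions with finite modular; it is a vector space
because the growth is bounded by a power. Functions are not identified almost everywhere. -/
def modularSpace (hG : IsMusielakOrlicz G g m p) (μ : Measure Z) : Submodule ℝ (Z → ℝ) where
  carrier := {w | Measurable w ∧ Integrable (fun z => G z (w z)) μ}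
  zero_mem' := ⟨measurable_const, by simp [(hG.young _).map_zero]⟩
  add_mem' := fun {w k} hw hk =>
    ⟨hw.1.add hk.1, ((hw.2.add hk.2).const_mul (2 ^ p)).mono'
      (measurable_apply_of_uncurry hG.measurable (hw.1.add hk.1)).aestronglyMeasurable
      (ae_of_all _ fun z => by
        rw [Real.norm_of_nonneg ((hG.young z).nonneg _)]
        exact (hG.young z).add_le _ _)⟩
  smul_mem' := fun c w hw =>
    ⟨hw.1.const_smul c, (hw.2.const_mul (max 1 |c| ^ p)).mono'
      (measurable_apply_of_uncurry hG.measurable (hw.1.const_smul c)).aestronglyMeasurable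
      (ae_of_all _ fun z => by
        rw [Real.norm_of_nonneg ((hG.young z).nonneg _)]
        exact (hG.young z).mul_le_rpow_mul (le_max_left _ _) (le_max_right _ _) _)⟩

variable (hG : IsMusielakOrlicz G g m p) {w k : Z → ℝ}

lemma mem_modularSpace_iff_lintegral :
    w ∈ hG.modularSpace μ ↔ Measurable w ∧ ∫⁻ z, ENNReal.ofReal (G z (w z)) ∂μ < ⊤ := by
  refine and_congr_right fun hw => ?_
  rw [← hasFiniteIntegral_iff_ofReal (ae_of_all _ fun z => (hG.young z).nonneg _)]
  exact and_iff_right (measurable_apply_of_uncurry hG.measurable hw).aestronglyMeasurable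

lemma ofReal_modular (hw : w ∈ hG.modularSpace μ) :
    ENNReal.ofReal (modular μ G w) = ∫⁻ z, ENNReal.ofReal (G z (w z)) ∂μ :=
  ofReal_integral_eq_lintegral_ofReal hw.2 (ae_of_all _ fun z => (hG.young z).nonneg _)

lemma modular_smul_le {K : ℝ} (hK : 1 ≤ K) (hw : w ∈ hG.modularSpace μ) :
    modular μ G (K • w) ≤ K ^ p * modular μ G w := by
  rw [modular, modular, ← integral_const_mul]
  exact integral_mono ((hG.modularSpace μ).smul_mem K hw).2 (hw.2.const_mul _)
    fun z => (hG.young z).le_rpow_mul hK _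

lemma rpow_mul_modular_le {K : ℝ} (hK : 1 ≤ K) (hw : w ∈ hG.modularSpace μ) :
    K ^ m * modular μ G w ≤ modular μ G (K • w) := by
  rw [modular, modular, ← integral_const_mul]
  exact integral_mono (hw.2.const_mul _) ((hG.modularSpace μ).smul_mem K hw).2
    fun z => (hG.young z).rpow_mul_le hK _

lemma modular_clarkson (hw : w ∈ hG.modularSpace μ) (hk : k ∈ hG.modularSpace μ) :
    modular μ G ((1 / 2 : ℝ) • (w + k)) + modular μ G ((1 / 2 : ℝ) • (w - k)) ≤
      (modular μ G w + modular μ G k) / 2 := by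
  have hmid := (hG.modularSpace μ).smul_mem (1 / 2) (add_mem hw hk)
  have hdiff := (hG.modularSpace μ).smul_mem (1 / 2) (sub_mem hw hk)
  rw [modular, modular, modular, modular, ← integral_add hmid.2 hdiff.2,
    ← integral_add hw.2 hk.2, ← integral_div]
  refine integral_mono (hmid.2.add hdiff.2) ((hw.2.add hk.2).div_const 2) fun z => ?_
  simpa [div_eq_inv_mul] using (hG.young z).clarkson (w z) (k z)

lemma hasDerivAt_modular (hw : w ∈ hG.modularSpace μ) (hk : k ∈ hG.modularSpace μ) :
    Integrable (fun z => g z (w z) * k z) μ ∧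
      HasDerivAt (fun t : ℝ => modular μ G (w + t • k)) (∫ z, g z (w z) * k z ∂μ) 0 :=
  hasDerivAt_integral_add_mul (fun z => (hG.young z).hasDerivAt)
    (fun t => (add_mem hw ((hG.modularSpace μ).smul_mem t hk)).2.aestronglyMeasurable)
    ((measurable_apply_of_uncurry hG.measurable_deriv hw.1).mul hk.1).aestronglyMeasurable
    hw.2 ((hw.2.add hk.2).const_mul (p * 2 ^ p))
    (ae_of_all _ fun z _ ht => (hG.young z).abs_deriv_add_mul_mul_le _ _ ht)

lemma ae_exists_tendsto_of_modular_le_geometric {W : ℕ → Z → ℝ}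
    (hW : ∀ n, W n ∈ hG.modularSpace μ)
    (hle : ∀ n, modular μ G ((2 : ℝ) ^ n • (W (n + 1) - W n)) ≤ (1 / 2) ^ n) :
    ∀ᵐ z ∂μ, ∃ l, Tendsto (fun n => W n z) atTop (𝓝 l) := by
  have hmem : ∀ n, (2 : ℝ) ^ n • (W (n + 1) - W n) ∈ hG.modularSpace μ := fun n =>
    (hG.modularSpace μ).smul_mem _ (sub_mem (hW _) (hW n))
  have hzero := (ae_tendsto_zero_and_exists_bound_of_summable_integral (fun n => (hmem n).2)
    (fun n z => (hG.young z).nonneg _)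
    (Summable.of_nonneg_of_le (fun n => hG.modular_nonneg _) hle summable_geometric_two)).1
  filter_upwards [hzero] with z hz
  have hsmall : ∀ᶠ n : ℕ in atTop, ‖W (n + 1) z - W n z‖ ≤ (1 / 2 : ℝ) ^ n := by
    filter_upwards [hz.eventually_lt_const ((hG.young z).pos_of_pos one_pos)] with n hn
    have habs : |(2 : ℝ) ^ n * (W (n + 1) z - W n z)| ≤ 1 := by
      by_contra! hlt
      exact hn.not_ge ((hG.young z).le_of_abs_le_abs (by simpa using hlt.le))
    rw [abs_mul, abs_of_pos (by positivity)] at habs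
    rwa [Real.norm_eq_abs, one_div, inv_pow, ← one_div, le_div_iff₀' (by positivity)]
  have hsum : Summable fun n => dist (W n z) (W (n + 1) z) := by
    simpa only [dist_eq_norm'] using
      (Summable.of_norm_bounded_eventually_nat summable_geometric_two hsmall).norm
  exact cauchySeq_tendsto_of_complete (cauchySeq_of_summable_dist hsum)

end IsMusielakOrlicz

/-- Near-minimizers over a decreasing sequence of convex sets: a midpoint cannot do much better
than its endpoints, so by Clarkson's inequality their difference is small. -/
lemma exists_seq_tendsto_modular_and_cauchy {V : Type*} [AddCommGroup V] [Module ℝ V]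
    {r : V → ℝ} {C : ℕ → Set V} (hr : ∀ v, 0 ≤ r v) (hconv : ∀ n, Convex ℝ (C n))
    (hanti : Antitone C)
    (clarkson : ∀ v ∈ C 0, ∀ w ∈ C 0,
      r ((1 / 2 : ℝ) • (v + w)) + r ((1 / 2 : ℝ) • (v - w)) ≤ (r v + r w) / 2)
    {u : ℕ → V} (hu : ∀ n, u n ∈ C n) {e : ℝ} (he : Tendsto (fun n => r (u n)) atTop (𝓝 e)) :
    ∃ v : ℕ → V, (∀ n, v n ∈ C n) ∧ (∃ D ≤ e, Tendsto (fun n => r (v n)) atTop (𝓝 D)) ∧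
      ∀ ε > 0, ∀ᶠ n in atTop, ∀ k ≥ n, r ((1 / 2 : ℝ) • (v k - v n)) ≤ ε := by
  set d : ℕ → ℝ := fun n => sInf (r '' C n)
  have hbdd : ∀ n, BddBelow (r '' C n) := fun n => ⟨0, forall_mem_image.2 fun v _ => hr v⟩
  have hdle : ∀ n, ∀ v ∈ C n, d n ≤ r v := fun n v hv => csInf_le (hbdd n) (mem_image_of_mem r hv)
  have hdmono : Monotone d := fun n k hnk =>
    csInf_le_csInf (hbdd n) ⟨_, mem_image_of_mem r (hu k)⟩ (image_mono (hanti hnk))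
  have hde : ∀ n, d n ≤ e := fun n => ge_of_tendsto he <| by
    filter_upwards [eventually_ge_atTop n] with k hk using hdle n _ (hanti hk (hu k))
  have hdbdd : BddAbove (range d) := ⟨e, forall_mem_range.2 hde⟩
  set D := ⨆ n, d n
  have hdD : Tendsto d atTop (𝓝 D) := tendsto_atTop_ciSup hdmono hdbdd
  have hlt : ∀ n : ℕ, ∃ v ∈ C n, r v < d n + 1 / ((n : ℝ) + 1) := fun n => by
    simpa only [exists_mem_image] using exists_lt_of_csInf_lt (s := r '' C n)
      ⟨_, mem_image_of_mem r (hu n)⟩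
      (lt_add_of_pos_right (d n) (Nat.one_div_pos_of_nat (α := ℝ) (n := n)))
  choose v hv hvlt using hlt
  have hrv : Tendsto (fun n => r (v n)) atTop (𝓝 D) :=
    tendsto_of_tendsto_of_tendsto_of_le_of_le hdD
      (by simpa using hdD.add tendsto_one_div_add_atTop_nhds_zero_nat)
      (fun n => hdle n _ (hv n)) fun n => (hvlt n).le
  refine ⟨v, hv, ⟨D, ciSup_le hde, hrv⟩, fun ε hε => ?_⟩
  obtain ⟨n₀, hn₀⟩ := ((hdD.eventually_const_lt (show D - ε / 2 < D by linarith)).and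
    (hrv.eventually_lt_const (show D < D + ε / 2 by linarith))).exists_forall_of_atTop
  filter_upwards [eventually_ge_atTop n₀] with n hn k hk
  have hmid : (1 / 2 : ℝ) • (v k + v n) ∈ C n := by
    rw [smul_add]
    exact hconv n (hanti hk (hv k)) (hv n) one_half_pos.le one_half_pos.le (add_halves 1)
  have hclarkson := clarkson _ (hanti k.zero_le (hv k)) _ (hanti n.zero_le (hv n))
  linarith [hdle n _ hmid, (hn₀ n hn).1, (hn₀ n hn).2, (hn₀ k (hn.trans hk)).2]

/-- This replaces weak compactness: convex combinations of tails converge almost everywhere, and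
do not increase the limiting modular. -/
lemma IsMusielakOrlicz.exists_convexHull_ae_tendsto {Z : Type*} [MeasurableSpace Z]
    {μ : Measure Z} {G g : Z → ℝ → ℝ} {m p : ℝ} (hG : IsMusielakOrlicz G g m p)
    {W : ℕ → Z → ℝ} (hW : ∀ n, W n ∈ hG.modularSpace μ) {e : ℝ}
    (he : Tendsto (fun n => modular μ G (W n)) atTop (𝓝 e)) :
    ∃ V : ℕ → Z → ℝ, (∀ n, V n ∈ convexHull ℝ (W '' Ici n)) ∧
      (∃ D ≤ e, Tendsto (fun n => modular μ G (V n)) atTop (𝓝 D)) ∧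
      ∀ᵐ z ∂μ, ∃ l, Tendsto (fun n => V n z) atTop (𝓝 l) := by
  have hanti : Antitone fun n => convexHull ℝ (W '' Ici n) := fun n k hnk =>
    convexHull_mono (image_mono (Ici_subset_Ici.2 hnk))
  have hmem : ∀ n, convexHull ℝ (W '' Ici n) ⊆ hG.modularSpace μ := fun n =>
    convexHull_min (image_subset_iff.2 fun i _ => hW i) (hG.modularSpace μ).convex
  obtain ⟨v, hv, ⟨D, hDe, hvD⟩, hcauchy⟩ := exists_seq_tendsto_modular_and_cauchy
    (r := modular μ G) hG.modular_nonneg (fun n => convex_convexHull ℝ _) hanti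
    (fun v hv w hw => hG.modular_clarkson (hmem 0 hv) (hmem 0 hw))
    (fun n => subset_convexHull ℝ _ (mem_image_of_mem W self_mem_Ici)) he
  obtain ⟨θ, hθ, hfast⟩ := extraction_forall_of_eventually fun j : ℕ =>
    hcauchy ((((2 : ℝ) ^ (j + 1)) ^ p)⁻¹ * (1 / 2) ^ j) (by positivity)
  refine ⟨v ∘ θ, fun n => hanti (hθ.id_le n) (hv _), ⟨D, hDe, hvD.comp hθ.tendsto_atTop⟩, ?_⟩
  refine hG.ae_exists_tendsto_of_modular_le_geometric (fun n => hmem _ (hv _)) fun n => ?_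
  have hdiff : (1 / 2 : ℝ) • (v (θ (n + 1)) - v (θ n)) ∈ hG.modularSpace μ :=
    (hG.modularSpace μ).smul_mem _ (sub_mem (hmem _ (hv _)) (hmem _ (hv _)))
  calc modular μ G ((2 : ℝ) ^ n • (v (θ (n + 1)) - v (θ n)))
      = modular μ G ((2 : ℝ) ^ (n + 1) • (1 / 2 : ℝ) • (v (θ (n + 1)) - v (θ n))) := by
        rw [smul_smul, pow_succ, mul_assoc, mul_one_div_cancel two_ne_zero, mul_one]
    _ ≤ ((2 : ℝ) ^ (n + 1)) ^ p * modular μ G ((1 / 2 : ℝ) • (v (θ (n + 1)) - v (θ n))) :=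
        hG.modular_smul_le (one_le_pow₀ one_le_two) hdiff
    _ ≤ ((2 : ℝ) ^ (n + 1)) ^ p * ((((2 : ℝ) ^ (n + 1)) ^ p)⁻¹ * (1 / 2) ^ n) := by
        gcongr
        exact hfast n _ (hθ.monotone n.le_succ)
    _ = (1 / 2) ^ n := mul_inv_cancel_left₀ (by positivity) _

lemma tendsto_of_mem_convexHull_image_Ici {α : Type*} {U V : ℕ → α → ℝ} {x : α} {l : ℝ}
    (hU : Tendsto (fun n => U n x) atTop (𝓝 l)) (hV : ∀ n, V n ∈ convexHull ℝ (U '' Ici n)) :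
    Tendsto (fun n => V n x) atTop (𝓝 l) := by
  refine Metric.nhds_basis_closedBall.tendsto_right_iff.2 fun ε hε => ?_
  obtain ⟨n₀, hn₀⟩ :=
    (hU.eventually (Metric.closedBall_mem_nhds l hε)).exists_forall_of_atTop
  filter_upwards [eventually_ge_atTop n₀] with n hn
  have hconv : Convex ℝ {f : α → ℝ | f x ∈ Metric.closedBall l ε} :=
    (convex_closedBall l ε).linear_preimage (LinearMap.proj (R := ℝ) (φ := fun _ : α => ℝ) x)
  refine convexHull_min ?_ hconv (hV n)
  exact image_subset_iff.2 fun i hi => hn₀ i (hn.trans hi)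

section PowerNonlinearities

variable {α : Type*} [MeasurableSpace α] {μ : Measure α} {F f : α → ℝ → ℝ} {q u v w : α → ℝ}
  {Q C : ℝ}

lemma add_rpow_le_two_rpow_mul {a b r : ℝ} (ha : 0 ≤ a) (hb : 0 ≤ b) (hr : r ∈ Icc 0 Q) :
    (a + b) ^ r ≤ 2 ^ Q * (a ^ r + b ^ r) := by
  wlog hab : a ≤ b generalizing a b
  · simpa only [add_comm] using this hb ha (le_of_not_ge hab)
  calc (a + b) ^ r ≤ (2 * b) ^ r := by
        gcongr
        · exact hr.1
        · linarith
    _ = 2 ^ r * b ^ r := Real.mul_rpow zero_le_two hb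
    _ ≤ 2 ^ Q * (a ^ r + b ^ r) := by
        gcongr
        · exact one_le_two
        · exact hr.2
        · exact le_add_of_nonneg_left (Real.rpow_nonneg ha r)

/-- The variable exponent Lebesgue class of measurable functions with `|u| ^ q` integrable.
Functions are not identified almost everywhere. -/
def lebesgueClass (μ : Measure α) (q : α → ℝ) : Set (α → ℝ) :=
  {u | Measurable u ∧ Integrable (fun x => |u x| ^ q x) μ}

lemma sub_mem_lebesgueClass (hq : AEMeasurable q μ) (hqQ : ∀ᵐ x ∂μ, q x ∈ Icc 0 Q)
    (hu : u ∈ lebesgueClass μ q) (hv : v ∈ lebesgueClass μ q) : u - v ∈ lebesgueClass μ q := by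
  refine ⟨hu.1.sub hv.1, ((hu.2.add hv.2).const_mul (2 ^ Q)).mono'
    ((hu.1.sub hv.1).abs.aemeasurable.pow hq).aestronglyMeasurable ?_⟩
  filter_upwards [hqQ] with x hx
  rw [Real.norm_of_nonneg (by positivity)]
  calc |u x - v x| ^ q x ≤ (|u x| + |v x|) ^ q x :=
        Real.rpow_le_rpow (abs_nonneg _) (abs_sub _ _) hx.1
    _ ≤ 2 ^ Q * (|u x| ^ q x + |v x| ^ q x) :=
        add_rpow_le_two_rpow_mul (abs_nonneg _) (abs_nonneg _) hx

/-- A Carathéodory nonlinearity `f` with primitive `F` and growth `|f x t| ≤ C |t| ^ (q x - 1)`,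
the exponent `q` taking values in `[1, Q]`. -/
structure IsPowerNonlinearity (μ : Measure α) (F f : α → ℝ → ℝ) (q : α → ℝ) (Q C : ℝ) :
    Prop where
  measurable : Measurable (Function.uncurry F)
  measurable_deriv : Measurable (Function.uncurry f)
  hasDerivAt : ∀ x t, HasDerivAt (F x) (f x t) t
  map_zero : ∀ x, F x 0 = 0
  aemeasurable_exponent : AEMeasurable q μ
  exponent_mem : ∀ᵐ x ∂μ, q x ∈ Icc 1 Q
  constant_nonneg : 0 ≤ C
  abs_deriv_le : ∀ᵐ x ∂μ, ∀ t, |f x t| ≤ C * |t| ^ (q x - 1)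

namespace IsPowerNonlinearity

lemma exponent_mem_Icc_zero (hF : IsPowerNonlinearity μ F f q Q C) :
    ∀ᵐ x ∂μ, q x ∈ Icc 0 Q :=
  hF.exponent_mem.mono fun _ hx => ⟨zero_le_one.trans hx.1, hx.2⟩

lemma abs_deriv_mul_le (hF : IsPowerNonlinearity μ F f q Q C) :
    ∀ᵐ x ∂μ, ∀ S t r : ℝ, |t| ≤ S → |r| ≤ S → |f x t * r| ≤ C * S ^ q x := by
  filter_upwards [hF.exponent_mem, hF.abs_deriv_le] with x hq hf S t r ht hr
  have hS : 0 ≤ S := (abs_nonneg t).trans ht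
  have hq' : 0 ≤ q x - 1 := sub_nonneg.2 hq.1
  calc |f x t * r| = |f x t| * |r| := abs_mul _ _
    _ ≤ (C * |t| ^ (q x - 1)) * |r| := by
        gcongr
        exact hf t
    _ ≤ (C * S ^ (q x - 1)) * S := by
        have := hF.constant_nonneg
        gcongr
    _ = C * S ^ q x := by
        rw [mul_assoc, ← Real.rpow_add_one' hS (by linarith [hq.1]), sub_add_cancel]

lemma abs_le (hF : IsPowerNonlinearity μ F f q Q C) :
    ∀ᵐ x ∂μ, ∀ t, |F x t| ≤ C * |t| ^ q x := by
  filter_upwards [hF.abs_deriv_mul_le] with x hx t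
  have hderiv : ∀ τ : ℝ, HasDerivAt (fun τ => F x (τ * t)) (f x (τ * t) * t) τ := fun τ =>
    (hF.hasDerivAt x (τ * t)).comp τ (hasDerivAt_mul_const t)
  have hmvt := norm_image_sub_le_of_norm_deriv_le_segment_01' (f := fun τ => F x (τ * t))
    (C := C * |t| ^ q x)
    (fun τ _ => (hderiv τ).hasDerivWithinAt) fun τ hτ => hx |t| (τ * t) t (by
      rw [abs_mul, abs_of_nonneg hτ.1]
      exact mul_le_of_le_one_left (abs_nonneg t) hτ.2.le) le_rfl
  simpa [hF.map_zero] using hmvt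

lemma integrable_comp (hF : IsPowerNonlinearity μ F f q Q C) (hu : u ∈ lebesgueClass μ q) :
    Integrable (fun x => F x (u x)) μ :=
  (hu.2.const_mul C).mono'
    (measurable_apply_of_uncurry hF.measurable hu.1).aestronglyMeasurable
    (hF.abs_le.mono fun x hx => hx (u x))

lemma integral_comp_le (hF : IsPowerNonlinearity μ F f q Q C) (hu : u ∈ lebesgueClass μ q) :
    ∫ x, F x (u x) ∂μ ≤ C * ∫ x, |u x| ^ q x ∂μ := by
  rw [← integral_const_mul]
  exact integral_mono_ae (hF.integrable_comp hu) (hu.2.const_mul C)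
    (hF.abs_le.mono fun x hx => (le_abs_self _).trans (hx (u x)))

lemma hasDerivAt_integral (hF : IsPowerNonlinearity μ F f q Q C) (hu : u ∈ lebesgueClass μ q)
    (hv : v ∈ lebesgueClass μ q) :
    HasDerivAt (fun t : ℝ => ∫ x, F x (u x + t * v x) ∂μ) (∫ x, f x (u x) * v x ∂μ) 0 := by
  refine (hasDerivAt_integral_add_mul
    (bound := fun x => C * (2 ^ Q * (|u x| ^ q x + |v x| ^ q x))) hF.hasDerivAt
    (fun t => (measurable_apply_of_uncurry hF.measurable
      (hu.1.add (hv.1.const_mul t))).aestronglyMeasurable)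
    ((measurable_apply_of_uncurry hF.measurable_deriv hu.1).mul hv.1).aestronglyMeasurable
    (hF.integrable_comp hu) (((hu.2.add hv.2).const_mul _).const_mul _) ?_).2
  filter_upwards [hF.abs_deriv_mul_le, hF.exponent_mem_Icc_zero] with x hx hq t ht
  have habs : |u x + t * v x| ≤ |u x| + |v x| := (abs_add_le _ _).trans <| by
    rw [abs_mul]
    gcongr
    exact mul_le_of_le_one_left (abs_nonneg _) ht
  refine (hx _ _ _ habs (le_add_of_nonneg_left (abs_nonneg _))).trans
    (mul_le_mul_of_nonneg_left ?_ hF.constant_nonneg)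
  exact add_rpow_le_two_rpow_mul (abs_nonneg _) (abs_nonneg _) hq

lemma tendsto_integral_comp (hF : IsPowerNonlinearity μ F f q Q C) {U : ℕ → α → ℝ} {h : α → ℝ}
    (hU : ∀ n, Measurable (U n)) (hw : w ∈ lebesgueClass μ q) (hh : Integrable h μ)
    (hle : ∀ᵐ x ∂μ, ∀ n, |U n x - w x| ^ q x ≤ h x)
    (hlim : ∀ᵐ x ∂μ, Tendsto (fun n => U n x) atTop (𝓝 (w x))) :
    Tendsto (fun n => ∫ x, F x (U n x) ∂μ) atTop (𝓝 (∫ x, F x (w x) ∂μ)) := by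
  refine tendsto_integral_of_dominated_convergence
    (fun x => C * (2 ^ Q * (h x + |w x| ^ q x)))
    (fun n => (measurable_apply_of_uncurry hF.measurable (hU n)).aestronglyMeasurable)
    (((hh.add hw.2).const_mul _).const_mul _) (fun n => ?_)
    (hlim.mono fun x hx => ((hF.hasDerivAt x (w x)).continuousAt.tendsto).comp hx)
  filter_upwards [hF.abs_le, hF.exponent_mem_Icc_zero, hle] with x hFx hq hx
  refine (hFx _).trans (mul_le_mul_of_nonneg_left ?_ hF.constant_nonneg)
  calc |U n x| ^ q x ≤ (|U n x - w x| + |w x|) ^ q x :=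
        Real.rpow_le_rpow (abs_nonneg _) (by simpa using abs_add_le (U n x - w x) (w x)) hq.1
    _ ≤ 2 ^ Q * (|U n x - w x| ^ q x + |w x| ^ q x) :=
        add_rpow_le_two_rpow_mul (abs_nonneg _) (abs_nonneg _) hq
    _ ≤ 2 ^ Q * (h x + |w x| ^ q x) := by
        gcongr
        exact hx n

lemma exists_subseq_tendsto (hF : IsPowerNonlinearity μ F f q Q C) {U : ℕ → α → ℝ}
    (hU : ∀ n, U n ∈ lebesgueClass μ q) (hw : w ∈ lebesgueClass μ q)
    (hlim : Tendsto (fun n => ∫ x, |U n x - w x| ^ q x ∂μ) atTop (𝓝 0)) :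
    ∃ θ : ℕ → ℕ, StrictMono θ ∧
      (∀ᵐ x ∂μ, Tendsto (fun n => U (θ n) x) atTop (𝓝 (w x))) ∧
      Tendsto (fun n => ∫ x, F x (U (θ n) x) ∂μ) atTop (𝓝 (∫ x, F x (w x) ∂μ)) := by
  obtain ⟨θ, hθ, hfast⟩ := extraction_forall_of_eventually fun j : ℕ =>
    hlim.eventually_lt_const (show (0 : ℝ) < (1 / 2) ^ j by positivity)
  obtain ⟨hzero, h, hh, hle⟩ := ae_tendsto_zero_and_exists_bound_of_summable_integral
    (fun n => (sub_mem_lebesgueClass hF.aemeasurable_exponent hF.exponent_mem_Icc_zero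
      (hU (θ n)) hw).2)
    (fun n x => Real.rpow_nonneg (abs_nonneg _) _)
    (Summable.of_nonneg_of_le (fun n => integral_nonneg fun x => Real.rpow_nonneg (abs_nonneg _) _)
      (fun n => (hfast n).le) summable_geometric_two)
  have hae : ∀ᵐ x ∂μ, Tendsto (fun n => U (θ n) x) atTop (𝓝 (w x)) := by
    filter_upwards [hzero, hF.exponent_mem] with x hx hq
    have hq0 : 0 < q x := one_pos.trans_le hq.1
    have habs := hx.rpow_const (p := (q x)⁻¹) (Or.inr (inv_nonneg.2 hq0.le))
    simp only [Pi.sub_apply, Real.rpow_rpow_inv (abs_nonneg _) hq0.ne',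
      Real.zero_rpow (inv_ne_zero hq0.ne')] at habs
    exact tendsto_iff_norm_sub_tendsto_zero.2 habs
  exact ⟨θ, hθ, hae, hF.tendsto_integral_comp (fun n => (hU _).1) hw hh hle hae⟩

end IsPowerNonlinearity

end PowerNonlinearities

section Jets

/-- The disjoint union of the pairs `(x, y)` that carry the nonlocal part of the energy and the
points `x` that carry its local parts. -/
abbrev PairOrPoint (N : ℕ) := (Eucl N × Eucl N) ⊕ Eucl N

/-- The pair at which `Φ` is evaluated; a point `x` counts as `(x, x)`, since `Φ̂_x = Φ_{x,x}`. -/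
def toPair : PairOrPoint N → Eucl N × Eucl N := Sum.elim id fun x => (x, x)

/-- The family `Φ_{x,y}`, indexed by pairs and points. -/
def energyDensity (a : Eucl N → Eucl N → ℝ → ℝ) (z : PairOrPoint N) : ℝ → ℝ :=
  PhiF a (toPair z).1 (toPair z).2

/-- The family `φ_{x,y}`, indexed by pairs and points. -/
def energyFlux (a : Eucl N → Eucl N → ℝ → ℝ) (z : PairOrPoint N) : ℝ → ℝ :=
  phiF a (toPair z).1 (toPair z).2

/-- The linear map `u ↦ (D^s u, u)` into functions on pairs and points; it turns the sum of the
three modulars into a single one. -/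
def jet (s : ℝ) : (Eucl N → ℝ) →ₗ[ℝ] (PairOrPoint N → ℝ) where
  toFun u := Sum.elim (Du s u) u
  map_add' u v := by
    ext (p | x)
    · exact (congrArg (· / _) (add_sub_add_comm _ _ _ _)).trans (add_div _ _ _)
    · rfl
  map_smul' c u := by
    ext (p | x)
    · exact (congrArg (· / _) (mul_sub c _ _).symm).trans (mul_div_assoc _ _ _)
    · rfl

/-- The density `1 / (2 |x - y| ^ N)` of the nonlocal part of the energy. -/
def gagliardoWeight (p : Eucl N × Eucl N) : ℝ := 1 / 2 / dist p.1 p.2 ^ (N : ℝ)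

/-- The measure on pairs and points with respect to which the energy is a single modular:
`dx dy / (2 |x - y| ^ N)` on `Q`, Lebesgue measure on `Ω` and `β dx` on its complement. -/
def energyMeasure (Ω : Set (Eucl N)) (β : Eucl N → ℝ) : Measure (PairOrPoint N) :=
  ((volume.restrict (Qset Ω)).withDensity fun p => ENNReal.ofReal (gagliardoWeight p)).map Sum.inl +
    (volume.restrict Ω +
      (volume.restrict Ωᶜ).withDensity fun x => ENNReal.ofReal (β x)).map Sum.inr

/-- The `λ`-independent part of the functional `J_λ`; junk value `0` off the energy space. -/
def energy (a : Eucl N → Eucl N → ℝ → ℝ) (s : ℝ) (Ω : Set (Eucl N)) (β : Eucl N → ℝ)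
    (u : Eucl N → ℝ) : ℝ :=
  modular (energyMeasure Ω β) (energyDensity a) (jet s u)

lemma measurableEmbedding_inl {X Y : Type*} [MeasurableSpace X] [MeasurableSpace Y] :
    MeasurableEmbedding (Sum.inl : X → X ⊕ Y) :=
  ⟨Sum.inl_injective, measurable_inl, fun _ => MeasurableSet.inl_image⟩

lemma measurableEmbedding_inr {X Y : Type*} [MeasurableSpace X] [MeasurableSpace Y] :
    MeasurableEmbedding (Sum.inr : Y → X ⊕ Y) :=
  ⟨Sum.inr_injective, measurable_inr, fun _ => MeasurableSet.inr_image⟩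

variable {a : Eucl N → Eucl N → ℝ → ℝ} {s m p : ℝ} {Ω : Set (Eucl N)} {β u : Eucl N → ℝ}

lemma measurable_toPair : Measurable (toPair (N := N)) :=
  measurable_fun_sum measurable_id (measurable_id.prodMk measurable_id)

lemma measurable_uncurry_energyFlux
    (ha : Measurable fun p : Eucl N × Eucl N × ℝ => a p.1 p.2.1 p.2.2) :
    Measurable (Function.uncurry (energyFlux a)) := by
  have hpair : Measurable fun z : PairOrPoint N × ℝ => toPair z.1 :=
    measurable_toPair.comp measurable_fst
  exact Measurable.ite (measurable_snd (measurableSet_singleton 0)) measurable_const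
    ((ha.comp (hpair.fst.prodMk (hpair.snd.prodMk measurable_snd.abs))).mul measurable_snd)

lemma isMusielakOrlicz_energyDensity
    (ha : Measurable fun p : Eucl N × Eucl N × ℝ => a p.1 p.2.1 p.2.2)
    (hmono : ∀ x y, StrictMono (phiF a x y)) (hcont : ∀ x y, Continuous (phiF a x y))
    (hΦ1 : ∀ x y t, 0 < t →
      m ≤ t * phiF a x y t / PhiF a x y t ∧ t * phiF a x y t / PhiF a x y t ≤ p)
    (hΦ2 : ∀ x y, ConvexOn ℝ (Ici 0) fun t => PhiF a x y √t) :
    IsMusielakOrlicz (energyDensity a) (energyFlux a) m p where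
  young _ := isYoungFunction_PhiF a _ _ (hmono _ _) (hcont _ _) (hΦ1 _ _) (hΦ2 _ _)
  measurable := measurable_uncurry_primitive (h := energyFlux a) (fun _ => hcont _ _)
    (measurable_uncurry_energyFlux ha)
  measurable_deriv := measurable_uncurry_energyFlux ha

lemma measurable_jet_iff : Measurable (jet s u) ↔ Measurable u :=
  ⟨fun h => h.comp measurable_inr, fun h => measurable_fun_sum
    (((h.comp measurable_fst).sub (h.comp measurable_snd)).div
      ((measurable_fst.dist measurable_snd).pow_const s)) h⟩

lemma gagliardoWeight_nonneg (p : Eucl N × Eucl N) : 0 ≤ gagliardoWeight p := by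
  unfold gagliardoWeight
  positivity

lemma measurable_gagliardoWeight : Measurable (gagliardoWeight (N := N)) :=
  measurable_const.div ((measurable_fst.dist measurable_snd).pow_const _)

lemma lintegral_energyMeasure (hβ : Measurable β) {h : PairOrPoint N → ℝ≥0∞}
    (hh : Measurable h) :
    ∫⁻ z, h z ∂energyMeasure Ω β =
      (∫⁻ p in Qset Ω, ENNReal.ofReal (gagliardoWeight p) * h (Sum.inl p)) +
        (∫⁻ x in Ω, h (Sum.inr x)) + ∫⁻ x in Ωᶜ, ENNReal.ofReal (β x) * h (Sum.inr x) := by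
  have hpairs : Measurable fun p => h (Sum.inl p) := hh.comp measurable_inl
  have hpoints : Measurable fun x => h (Sum.inr x) := hh.comp measurable_inr
  rw [energyMeasure, lintegral_add_measure, lintegral_map hh measurable_inl,
    lintegral_map hh measurable_inr, lintegral_add_measure,
    lintegral_withDensity_eq_lintegral_mul _ measurable_gagliardoWeight.ennreal_ofReal hpairs,
    lintegral_withDensity_eq_lintegral_mul _ hβ.ennreal_ofReal hpoints, add_assoc]
  rfl

lemma integral_energyMeasure (hβ : Measurable β) (hβ0 : ∀ᵐ x ∂volume.restrict Ωᶜ, 0 ≤ β x)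
    {h : PairOrPoint N → ℝ} (hh : Integrable h (energyMeasure Ω β)) :
    ∫ z, h z ∂energyMeasure Ω β = (∫ p in Qset Ω, gagliardoWeight p * h (Sum.inl p)) +
      (∫ x in Ω, h (Sum.inr x)) + ∫ x in Ωᶜ, β x * h (Sum.inr x) := by
  rw [energyMeasure] at hh ⊢
  have hpairs := hh.left_of_add_measure
  have hpoints := hh.right_of_add_measure
  have hlocal : Integrable (fun x => h (Sum.inr x)) _ :=
    measurableEmbedding_inr.integrable_map_iff.1 hpoints
  rw [integral_add_measure hpairs hpoints, measurableEmbedding_inl.integral_map,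
    measurableEmbedding_inr.integral_map,
    integral_add_measure hlocal.left_of_add_measure hlocal.right_of_add_measure,
    integral_withDensity_eq_integral_toReal_smul measurable_gagliardoWeight.ennreal_ofReal
      (ae_of_all _ fun _ => ENNReal.ofReal_lt_top),
    integral_withDensity_eq_integral_toReal_smul hβ.ennreal_ofReal
      (ae_of_all _ fun _ => ENNReal.ofReal_lt_top), ← add_assoc]
  congr 1
  · simp only [ENNReal.toReal_ofReal (gagliardoWeight_nonneg _), smul_eq_mul]
  · refine integral_congr_ae (hβ0.mono fun x hx => ?_)
    simp only [ENNReal.toReal_ofReal hx, smul_eq_mul]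

lemma ae_energyMeasure_iff (hβ : Measurable β) {P : PairOrPoint N → Prop} :
    (∀ᵐ z ∂energyMeasure Ω β, P z) ↔
      (∀ᵐ p ∂volume.restrict (Qset Ω), 0 < gagliardoWeight p → P (Sum.inl p)) ∧
        (∀ᵐ x ∂volume.restrict Ω, P (Sum.inr x)) ∧
          ∀ᵐ x ∂volume.restrict Ωᶜ, 0 < β x → P (Sum.inr x) := by
  rw [energyMeasure, ae_add_measure_iff, measurableEmbedding_inl.ae_map_iff,
    measurableEmbedding_inr.ae_map_iff, ae_add_measure_iff,
    ae_withDensity_iff measurable_gagliardoWeight.ennreal_ofReal,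
    ae_withDensity_iff hβ.ennreal_ofReal]
  simp only [ne_eq, ENNReal.ofReal_eq_zero, not_le]

lemma ae_tendsto_jet (hβ : Measurable β) {U : ℕ → Eucl N → ℝ}
    (hU : ∀ᵐ x, Tendsto (fun n => U n x) atTop (𝓝 (u x))) :
    ∀ᵐ z ∂energyMeasure Ω β, Tendsto (fun n => jet s (U n) z) atTop (𝓝 (jet s u z)) := by
  refine (ae_energyMeasure_iff hβ).2 ⟨ae_restrict_of_ae ?_, ae_restrict_of_ae hU,
    ae_restrict_of_ae (hU.mono fun _ hx _ => hx)⟩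
  rw [Measure.volume_eq_prod]
  filter_upwards [Measure.quasiMeasurePreserving_fst.ae hU,
    Measure.quasiMeasurePreserving_snd.ae hU] with p hfst hsnd _
  exact (hfst.sub hsnd).div_const _

/-- Off `Ω` the weight `β` may vanish; there `u x` is recovered from `D^s u (x, y)` and `u y` for
some `y ∈ Ω`. -/
lemma ae_exists_tendsto_of_jet (hβ : Measurable β) (hΩ : IsOpen Ω) (hne : Ω.Nonempty)
    {U : ℕ → Eucl N → ℝ}
    (hU : ∀ᵐ z ∂energyMeasure Ω β, ∃ l, Tendsto (fun n => jet s (U n) z) atTop (𝓝 l)) :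
    ∀ᵐ x, ∃ l, Tendsto (fun n => U n x) atTop (𝓝 l) := by
  obtain ⟨hpairs, hpoints, -⟩ := (ae_energyMeasure_iff hβ).1 hU
  rw [ae_restrict_iff' hΩ.measurableSet] at hpoints
  rw [Qset, ae_restrict_iff' (hΩ.measurableSet.compl.prod hΩ.measurableSet.compl).compl,
    Measure.volume_eq_prod] at hpairs
  filter_upwards [hpoints, Measure.ae_ae_of_ae_prod hpairs] with x hx hxy
  by_cases hxΩ : x ∈ Ω
  · exact hx hxΩ
  obtain ⟨y, hy, hypoint, hypair⟩ :=
    (frequently_ae_iff.2 (hΩ.measure_pos volume hne).ne').and_eventually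
      (hpoints.and hxy) |>.exists
  have hdist : 0 < dist x y := dist_pos.2 fun h => hxΩ (h ▸ hy)
  obtain ⟨l, hl⟩ := hypoint hy
  obtain ⟨d, hd⟩ := hypair (fun h => h.2 hy) (by unfold gagliardoWeight; positivity)
  refine ⟨d * dist x y ^ s + l, ((hd.mul_const _).add hl).congr fun n => ?_⟩
  change (U n x - U n y) / dist x y ^ s * dist x y ^ s + U n y = U n x
  rw [div_mul_cancel₀ _ (by positivity), sub_add_cancel]

end Jets

/-- The assumptions under which `energy a s Ω β` is the modular of a generalized Young function:
`Φ` has growth exponents `m` and `p`, and `β` is a nonnegative weight off `Ω`. -/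
structure IsRobinEnergy (a : Eucl N → Eucl N → ℝ → ℝ) (Ω : Set (Eucl N)) (β : Eucl N → ℝ)
    (m p : ℝ) : Prop where
  isMusielakOrlicz : IsMusielakOrlicz (energyDensity a) (energyFlux a) m p
  measurable_weight : Measurable β
  weight_nonneg : ∀ᵐ x ∂volume.restrict Ωᶜ, 0 ≤ β x

namespace IsRobinEnergy

variable {a : Eucl N → Eucl N → ℝ → ℝ} {s m p : ℝ} {Ω : Set (Eucl N)} {β u : Eucl N → ℝ}

/-- The functions of finite energy, as a vector space; its elements are the elements of `X`. -/
def energySpace (h : IsRobinEnergy a Ω β m p) (s : ℝ) : Submodule ℝ (Eucl N → ℝ) :=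
  (h.isMusielakOrlicz.modularSpace (energyMeasure Ω β)).comap (jet s)

lemma energy_nonneg (h : IsRobinEnergy a Ω β m p) (u : Eucl N → ℝ) : 0 ≤ energy a s Ω β u :=
  h.isMusielakOrlicz.modular_nonneg _

lemma lintegral_energyDensity (h : IsRobinEnergy a Ω β m p) (hu : Measurable u) :
    ∫⁻ z, ENNReal.ofReal (energyDensity a z (jet s u z)) ∂energyMeasure Ω β =
      ENNReal.ofReal (1 / 2) * modQ a s Ω u 1 + modO a Ω u 1 + modB a Ω β u 1 := by
  have heven : ∀ z t, energyDensity a z |t| = energyDensity a z t := fun z =>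
    (h.isMusielakOrlicz.young z).apply_abs
  rw [lintegral_energyMeasure h.measurable_weight (measurable_apply_of_uncurry
    h.isMusielakOrlicz.measurable (measurable_jet_iff.2 hu)).ennreal_ofReal]
  refine congrArg₂ (· + ·) (congrArg₂ (· + ·) ?_ ?_) ?_
  · rw [modQ, ← lintegral_const_mul' _ _ ENNReal.ofReal_ne_top]
    refine lintegral_congr fun p => ?_
    have hquot : |u p.1 - u p.2| / (1 * dist p.1 p.2 ^ s) = |Du s u p| := by
      rw [one_mul, Du, abs_div, abs_of_nonneg (by positivity : 0 ≤ dist p.1 p.2 ^ s)]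
    rw [← ENNReal.ofReal_mul (gagliardoWeight_nonneg p), ← ENNReal.ofReal_mul one_half_pos.le,
      hquot, ← heven, gagliardoWeight, div_mul_eq_mul_div, mul_div_assoc]
    rfl
  · refine lintegral_congr fun x => ?_
    rw [div_one, ← heven]
    rfl
  · refine lintegral_congr_ae (h.weight_nonneg.mono fun x hx => ?_)
    simp only [div_one]
    rw [← heven, ENNReal.ofReal_mul hx]
    rfl

lemma rhoS_le (h : IsRobinEnergy a Ω β m p) (hu : Measurable u) :
    rhoS a s Ω β u ≤
      2 * ∫⁻ z, ENNReal.ofReal (energyDensity a z (jet s u z)) ∂energyMeasure Ω β := by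
  have htwo : (2 : ℝ≥0∞) * ENNReal.ofReal (1 / 2) = 1 := by
    rw [← ENNReal.ofReal_ofNat, ← ENNReal.ofReal_mul zero_le_two, mul_one_div_cancel two_ne_zero,
      ENNReal.ofReal_one]
  rw [h.lintegral_energyDensity hu, mul_add, mul_add, ← mul_assoc, htwo, one_mul, rhoS]
  gcongr <;> exact le_mul_of_one_le_left zero_le one_le_two

lemma lintegral_energyDensity_le_rhoS (h : IsRobinEnergy a Ω β m p) (hu : Measurable u) :
    ∫⁻ z, ENNReal.ofReal (energyDensity a z (jet s u z)) ∂energyMeasure Ω β ≤ rhoS a s Ω β u := by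
  rw [h.lintegral_energyDensity hu, rhoS]
  gcongr
  refine mul_le_of_le_one_left zero_le (ENNReal.ofReal_le_one.2 ?_)
  norm_num

lemma rhoS_le_ofReal_energy (h : IsRobinEnergy a Ω β m p)
    (hu : u ∈ h.energySpace s) :
    rhoS a s Ω β u ≤ ENNReal.ofReal (2 * energy a s Ω β u) := by
  rw [ENNReal.ofReal_mul zero_le_two, ENNReal.ofReal_ofNat, energy,
    h.isMusielakOrlicz.ofReal_modular hu]
  exact h.rhoS_le (measurable_jet_iff.1 hu.1)

lemma normM_le (h : IsRobinEnergy a Ω β m p) (hm : 0 < m)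
    (hu : u ∈ h.energySpace s) :
    normM a s Ω β u ≤ ENNReal.ofReal ((1 + 2 * energy a s Ω β u) ^ (1 / m)) := by
  have hE := h.energy_nonneg (s := s) u
  set K := (1 + 2 * energy a s Ω β u) ^ (1 / m) with hK
  have hK1 : 1 ≤ K := Real.one_le_rpow (by linarith) (by positivity)
  have hKm : K ^ m = 1 + 2 * energy a s Ω β u := by
    rw [hK, one_div, Real.rpow_inv_rpow (by linarith) hm.ne']
  refine sInf_le ⟨K, one_pos.trans_le hK1, rfl, ?_⟩
  have hdiv : (fun x => u x / K) = K⁻¹ • u := funext fun x => div_eq_inv_mul _ _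
  have hmem : K⁻¹ • u ∈ h.energySpace s := Submodule.smul_mem _ _ hu
  have hscale : K ^ m * energy a s Ω β (K⁻¹ • u) ≤ energy a s Ω β u := by
    have := h.isMusielakOrlicz.rpow_mul_modular_le hK1 hmem
    rwa [← map_smul, smul_inv_smul₀ (one_pos.trans_le hK1).ne'] at this
  rw [hdiv]
  refine (h.rhoS_le_ofReal_energy hmem).trans (ENNReal.ofReal_le_one.2 ?_)
  rw [hKm] at hscale
  nlinarith [h.energy_nonneg (s := s) (K⁻¹ • u)]

lemma exists_normM_le {U : ℕ → Eucl N → ℝ} (h : IsRobinEnergy a Ω β m p) (hm : 0 < m)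
    (hU : ∀ n, U n ∈ h.energySpace s) (hbdd : ∃ R, ∀ n, energy a s Ω β (U n) ≤ R) :
    ∃ B, ∀ n, normM a s Ω β (U n) ≤ ENNReal.ofReal B := by
  obtain ⟨R, hR⟩ := hbdd
  refine ⟨(1 + 2 * R) ^ (1 / m), fun n => (h.normM_le hm (hU n)).trans ?_⟩
  have hE := h.energy_nonneg (s := s) (U n)
  gcongr
  exact hR n

lemma XsetM_eq (h : IsRobinEnergy a Ω β m p) (hm : 0 < m) :
    XsetM a s Ω β = h.energySpace s := by
  refine Set.ext fun u => ⟨fun ⟨hu, ⟨l, hl, hfin⟩, _⟩ => ?_, fun hu => ⟨measurable_jet_iff.1 hu.1,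
    ⟨1, one_pos, ?_⟩, (h.normM_le hm hu).trans_lt ENNReal.ofReal_lt_top⟩⟩
  · have hdiv : (fun x => u x / l) = l⁻¹ • u := funext fun x => div_eq_inv_mul _ _
    rw [hdiv] at hfin
    have hmem : l⁻¹ • u ∈ h.energySpace s :=
      h.isMusielakOrlicz.mem_modularSpace_iff_lintegral.2
        ⟨measurable_jet_iff.2 (hu.const_smul _),
          (h.lintegral_energyDensity_le_rhoS (hu.const_smul _)).trans_lt hfin⟩
    rwa [Submodule.smul_mem_iff _ (inv_ne_zero hl.ne')] at hmem
  · simp only [div_one]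
    exact (h.rhoS_le_ofReal_energy hu).trans_lt ENNReal.ofReal_lt_top

lemma Jlam_eq (h : IsRobinEnergy a Ω β m p) (f : Eucl N → ℝ → ℝ) (lam : ℝ)
    (hu : u ∈ h.energySpace s) :
    Jlam a s Ω β f lam u = energy a s Ω β u - lam * ∫ x in Ω, Ff f x (u x) := by
  have hsum := h.isMusielakOrlicz.ofReal_modular hu
  rw [h.lintegral_energyDensity (measurable_jet_iff.1 hu.1)] at hsum
  obtain ⟨hQO, hB⟩ := ENNReal.add_ne_top.1 (hsum ▸ ENNReal.ofReal_ne_top)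
  obtain ⟨hQ, hO⟩ := ENNReal.add_ne_top.1 hQO
  rw [Jlam, energy, ← ENNReal.toReal_ofReal (h.isMusielakOrlicz.modular_nonneg _), hsum,
    ENNReal.toReal_add hQO hB, ENNReal.toReal_add hQ hO, ENNReal.toReal_mul,
    ENNReal.toReal_ofReal one_half_pos.le]

end IsRobinEnergy

lemma phiF_Du (a : Eucl N → Eucl N → ℝ → ℝ) (s : ℝ) (u : Eucl N → ℝ) (p : Eucl N × Eucl N) :
    phiF a p.1 p.2 (Du s u p) = Ku a s u p := by
  unfold phiF Ku
  refine if_congr ⟨fun h => ?_, fun h => by rw [Du, h, sub_self, zero_div]⟩ rfl rfl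
  by_contra hne
  have hdist : 0 < dist p.1 p.2 := dist_pos.2 fun heq => hne (congrArg u heq)
  exact div_ne_zero (sub_ne_zero.2 hne) (Real.rpow_pos_of_pos hdist s).ne' h

lemma phiF_eq_mul (a : Eucl N → Eucl N → ℝ → ℝ) (x y : Eucl N) (t : ℝ) :
    phiF a x y t = a x y |t| * t :=
  ite_eq_right_iff.2 fun h => by rw [h, mul_zero]

lemma IsRobinEnergy.hasDerivAt_energy {a : Eucl N → Eucl N → ℝ → ℝ} {s m p : ℝ}
    {Ω : Set (Eucl N)} {β u v : Eucl N → ℝ} (h : IsRobinEnergy a Ω β m p)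
    (hu : u ∈ h.energySpace s)
    (hv : v ∈ h.energySpace s) :
    HasDerivAt (fun t : ℝ => energy a s Ω β (u + t • v)) (Aform a s Ω β u v) 0 := by
  obtain ⟨hint, hderiv⟩ := h.isMusielakOrlicz.hasDerivAt_modular hu hv
  simp only [← map_smul, ← map_add] at hderiv
  refine hderiv.congr_deriv ?_
  rw [integral_energyMeasure h.measurable_weight h.weight_nonneg hint, Aform,
    ← integral_const_mul]
  refine congrArg₂ (· + ·) (congrArg₂ (· + ·) ?_ ?_) ?_
  · refine integral_congr_ae (ae_of_all _ fun p => ?_)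
    change gagliardoWeight p * (phiF a p.1 p.2 (Du s u p) * Du s v p) = _
    rw [phiF_Du, gagliardoWeight, div_mul_eq_mul_div, mul_div_assoc]
  all_goals
    refine integral_congr_ae (ae_of_all _ fun x => ?_)
    simp only [← phiF_eq_mul]
    rfl

lemma lintegral_rpow_le_of_normq_lt {Ω : Set (Eucl N)} (hΩ : MeasurableSet Ω)
    {q u : Eucl N → ℝ} {Q K : ℝ} (hq : ∀ x ∈ Ω, q x ∈ Icc 0 Q) (hK : 1 ≤ K)
    (hu : normq Ω q u < ENNReal.ofReal K) :
    ∫⁻ x in Ω, ENNReal.ofReal (|u x| ^ q x) ≤ ENNReal.ofReal (K ^ Q) := by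
  obtain ⟨_, ⟨l, hl, rfl, hle⟩, hlt⟩ := sInf_lt_iff.1 hu
  have hlK : l ≤ K := ((ENNReal.ofReal_lt_ofReal_iff (one_pos.trans_le hK)).1 hlt).le
  have hpow : ∀ x ∈ Ω, |u x| ^ q x ≤ K ^ Q * |u x / l| ^ q x := fun x hx => by
    calc |u x| ^ q x = l ^ q x * |u x / l| ^ q x := by
          rw [← Real.mul_rpow hl.le (abs_nonneg _), abs_div, abs_of_pos hl,
            mul_div_cancel₀ _ hl.ne']
      _ ≤ K ^ Q * |u x / l| ^ q x := by
          gcongr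
          exact (Real.rpow_le_rpow hl.le hlK (hq x hx).1).trans
            (Real.rpow_le_rpow_of_exponent_le hK (hq x hx).2)
  calc ∫⁻ x in Ω, ENNReal.ofReal (|u x| ^ q x)
      ≤ ∫⁻ x in Ω, ENNReal.ofReal (K ^ Q) * ENNReal.ofReal (|u x / l| ^ q x) :=
        setLIntegral_mono' hΩ fun x hx => by
          rw [← ENNReal.ofReal_mul (by positivity)]
          exact ENNReal.ofReal_le_ofReal (hpow x hx)
    _ = ENNReal.ofReal (K ^ Q) * ∫⁻ x in Ω, ENNReal.ofReal (|u x / l| ^ q x) :=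
        lintegral_const_mul' _ _ ENNReal.ofReal_ne_top
    _ ≤ ENNReal.ofReal (K ^ Q) := mul_le_of_le_one_right zero_le hle

lemma exists_forall_mul_rpow_le {θ ε D : ℝ} (hθ0 : 0 ≤ θ) (hθ1 : θ < 1) (hε : 0 < ε)
    (hD : 0 ≤ D) : ∃ B, ∀ M, 0 ≤ M → D * M ^ θ ≤ ε * M + B := by
  refine ⟨(D / ε ^ θ) ^ (1 - θ)⁻¹, fun M hM => ?_⟩
  set b := (D / ε ^ θ) ^ (1 - θ)⁻¹ with hb
  have hb0 : 0 ≤ b := by positivity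
  calc D * M ^ θ = (ε * M) ^ θ * b ^ (1 - θ) := by
        rw [hb, Real.rpow_inv_rpow (by positivity) (sub_pos.2 hθ1).ne',
          Real.mul_rpow hε.le hM, mul_div_left_comm, mul_comm (ε ^ θ),
          mul_div_cancel_right₀ _ (Real.rpow_pos_of_pos hε θ).ne']
    _ ≤ θ * (ε * M) + (1 - θ) * b :=
        Real.geom_mean_le_arith_mean2_weighted hθ0 (sub_pos.2 hθ1).le (by positivity) hb0
          (add_sub_cancel _ _)
    _ ≤ ε * M + b :=
        add_le_add (mul_le_of_le_one_left (by positivity) hθ1.le)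
          (mul_le_of_le_one_left hb0 (sub_le_self _ hθ0))

namespace IsRobinEnergy

variable {a : Eucl N → Eucl N → ℝ → ℝ} {s m p : ℝ} {Ω : Set (Eucl N)} {β : Eucl N → ℝ}
  {f : Eucl N → ℝ → ℝ} {q : Eucl N → ℝ} {Q C : ℝ}

lemma mem_lebesgueClass_and_integral_le {u : Eucl N → ℝ} {c : ℝ} (h : IsRobinEnergy a Ω β m p)
    (hm : 0 < m) (hΩ : MeasurableSet Ω) (hqm : AEMeasurable q (volume.restrict Ω))
    (hq : ∀ x ∈ Ω, q x ∈ Icc 0 Q) (hc : 0 ≤ c) (hu : u ∈ h.energySpace s)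
    (hnorm : normq Ω q u ≤ ENNReal.ofReal c * normM a s Ω β u) :
    u ∈ lebesgueClass (volume.restrict Ω) q ∧
      ∫ x in Ω, |u x| ^ q x ≤ (c + 1) ^ Q * (1 + 2 * energy a s Ω β u) ^ (Q / m) := by
  have hE := h.energy_nonneg (s := s) u
  set K := (1 + 2 * energy a s Ω β u) ^ (1 / m) with hK
  have hK1 : 1 ≤ K := Real.one_le_rpow (by linarith) (by positivity)
  have hlt : normq Ω q u < ENNReal.ofReal ((c + 1) * K) :=
    calc normq Ω q u ≤ ENNReal.ofReal c * ENNReal.ofReal K := by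
          refine hnorm.trans ?_
          gcongr
          exact h.normM_le hm hu
      _ = ENNReal.ofReal (c * K) := (ENNReal.ofReal_mul hc).symm
      _ < ENNReal.ofReal ((c + 1) * K) :=
          (ENNReal.ofReal_lt_ofReal_iff (by positivity)).2 (by linarith)
  have hbound := lintegral_rpow_le_of_normq_lt hΩ hq (by nlinarith) hlt
  have hum : Measurable u := measurable_jet_iff.1 hu.1
  have hmeas : AEStronglyMeasurable (fun x => |u x| ^ q x) (volume.restrict Ω) :=
    (hum.abs.aemeasurable.pow hqm).aestronglyMeasurable
  have hnonneg : ∀ᵐ x ∂volume.restrict Ω, 0 ≤ |u x| ^ q x := ae_of_all _ fun x => by positivity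
  refine ⟨⟨hum, hmeas, ?_⟩, ?_⟩
  · rw [hasFiniteIntegral_iff_ofReal hnonneg]
    exact hbound.trans_lt ENNReal.ofReal_lt_top
  · have hKQ : K ^ Q = (1 + 2 * energy a s Ω β u) ^ (Q / m) := by
      rw [hK, ← Real.rpow_mul (by linarith), one_div_mul_eq_div]
    rw [integral_eq_lintegral_of_nonneg_ae hnonneg hmeas, ← hKQ,
      ← Real.mul_rpow (by positivity) (by positivity)]
    exact ENNReal.toReal_le_of_le_ofReal (by positivity) hbound

lemma exists_forall_half_energy_sub_le_Jlam {A θ lam : ℝ} (h : IsRobinEnergy a Ω β m p)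
    (hF : IsPowerNonlinearity (volume.restrict Ω) (Ff f) f q Q C) (hA : 0 ≤ A) (hθ0 : 0 ≤ θ)
    (hθ1 : θ < 1) (hlam : 0 ≤ lam)
    (hle : ∀ u ∈ h.energySpace s, u ∈ lebesgueClass (volume.restrict Ω) q ∧
      ∫ x in Ω, |u x| ^ q x ≤ A * (1 + 2 * energy a s Ω β u) ^ θ) :
    ∃ B, ∀ u ∈ h.energySpace s, energy a s Ω β u / 2 - B ≤ Jlam a s Ω β f lam u := by
  have hC := hF.constant_nonneg
  obtain ⟨B, hB⟩ := exists_forall_mul_rpow_le hθ0 hθ1 (ε := 1 / 4) (by norm_num)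
    (by positivity : 0 ≤ lam * (C * A))
  refine ⟨1 / 4 + B, fun u hu => ?_⟩
  obtain ⟨huq, hint⟩ := hle u hu
  have hE := h.energy_nonneg (s := s) u
  have hF_le : lam * ∫ x in Ω, Ff f x (u x) ≤ 1 / 4 * (1 + 2 * energy a s Ω β u) + B :=
    calc lam * ∫ x in Ω, Ff f x (u x)
        ≤ lam * (C * (A * (1 + 2 * energy a s Ω β u) ^ θ)) := by
          gcongr
          exact (hF.integral_comp_le huq).trans (by gcongr)
      _ = lam * (C * A) * (1 + 2 * energy a s Ω β u) ^ θ := by ring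
      _ ≤ 1 / 4 * (1 + 2 * energy a s Ω β u) + B := hB _ (by linarith)
  rw [h.Jlam_eq f lam hu]
  linarith

lemma energy_le_of_ae_tendsto {V : ℕ → Eucl N → ℝ} {u : Eucl N → ℝ} {e : ℝ}
    (h : IsRobinEnergy a Ω β m p) (hV : ∀ n, V n ∈ h.energySpace s) (hu : Measurable u)
    (hlim : ∀ᵐ x, Tendsto (fun n => V n x) atTop (𝓝 (u x)))
    (he : Tendsto (fun n => energy a s Ω β (V n)) atTop (𝓝 e)) :
    u ∈ h.energySpace s ∧ energy a s Ω β u ≤ e := by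
  have hjet : Measurable (jet s u) := measurable_jet_iff.2 hu
  have hint := integrable_and_integral_le_of_ae_tendsto (fun n => (hV n).2)
    (fun n z => (h.isMusielakOrlicz.young z).nonneg _)
    ((ae_tendsto_jet h.measurable_weight hlim).mono fun z hz =>
      ((h.isMusielakOrlicz.young z).hasDerivAt _).continuousAt.tendsto.comp hz)
    (fun n => le_rfl) he
  exact ⟨⟨hjet, hint.1⟩, hint.2⟩

/-- A substitute for weak lower semicontinuity of the energy: the limit is only prescribed on `Ω`,
and convex combinations of the sequence determine its continuation to the complement. -/
lemma exists_ae_eq_and_energy_le {U : ℕ → Eucl N → ℝ} {w : Eucl N → ℝ} {e : ℝ}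
    (h : IsRobinEnergy a Ω β m p) (hΩ : IsOpen Ω) (hne : Ω.Nonempty)
    (hU : ∀ n, U n ∈ h.energySpace s)
    (hlim : ∀ᵐ x ∂volume.restrict Ω, Tendsto (fun n => U n x) atTop (𝓝 (w x)))
    (he : Tendsto (fun n => energy a s Ω β (U n)) atTop (𝓝 e)) :
    ∃ u ∈ h.energySpace s, u =ᵐ[volume.restrict Ω] w ∧ energy a s Ω β u ≤ e := by
  obtain ⟨W, hW, ⟨D, hDe, hD⟩, hWlim⟩ :=
    h.isMusielakOrlicz.exists_convexHull_ae_tendsto (W := fun n => jet s (U n)) hU he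
  have hpull : ∀ n, ∃ v ∈ convexHull ℝ (U '' Ici n), jet s v = W n := fun n => by
    have hn := hW n
    rwa [← image_image (jet s) U, ← LinearMap.image_convexHull] at hn
  choose V hV hVW using hpull
  obtain rfl : (fun n => jet s (V n)) = W := funext hVW
  have hVmem : ∀ n, V n ∈ h.energySpace s := fun n =>
    convexHull_min (image_subset_iff.2 fun k _ => hU k) (h.energySpace s).convex (hV n)
  obtain ⟨u, hu, hVu⟩ := measurable_limit_of_tendsto_metrizable_ae
    (fun n => (measurable_jet_iff.1 (hVmem n).1).aemeasurable)
    (ae_exists_tendsto_of_jet h.measurable_weight hΩ hne hWlim)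
  obtain ⟨hmem, hle⟩ := h.energy_le_of_ae_tendsto hVmem hu hVu hD
  refine ⟨u, hmem, ?_, hle.trans hDe⟩
  filter_upwards [ae_restrict_of_ae hVu, hlim] with x hxu hxw
  exact tendsto_nhds_unique hxu (tendsto_of_mem_convexHull_image_Ici hxw hV)

lemma exists_isMinOn_Jlam {lam B : ℝ} (h : IsRobinEnergy a Ω β m p)
    (hF : IsPowerNonlinearity (volume.restrict Ω) (Ff f) f q Q C) (hΩ : IsOpen Ω)
    (hne : Ω.Nonempty)
    (hlp : ∀ u ∈ h.energySpace s, u ∈ lebesgueClass (volume.restrict Ω) q)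
    (hcoer : ∀ u ∈ h.energySpace s, energy a s Ω β u / 2 - B ≤ Jlam a s Ω β f lam u)
    (hcpt : ∀ U : ℕ → Eucl N → ℝ, (∀ n, U n ∈ h.energySpace s) →
      (∃ R, ∀ n, energy a s Ω β (U n) ≤ R) → ∃ ψ : ℕ → ℕ, StrictMono ψ ∧
        ∃ w ∈ h.energySpace s, Tendsto (fun n => ∫ x in Ω, |U (ψ n) x - w x| ^ q x) atTop (𝓝 0)) :
    ∃ u ∈ h.energySpace s, IsMinOn (Jlam a s Ω β f lam) (h.energySpace s) u := by
  have hbdd : BddBelow (Jlam a s Ω β f lam '' h.energySpace s) := by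
    refine ⟨-B, forall_mem_image.2 fun u hu => ?_⟩
    linarith [hcoer u hu, h.energy_nonneg (s := s) u]
  obtain ⟨j, hjanti, hjlim, hjmem⟩ :=
    exists_seq_tendsto_sInf ((h.energySpace s).nonempty.image (Jlam a s Ω β f lam)) hbdd
  set μ₀ := sInf (Jlam a s Ω β f lam '' h.energySpace s)
  choose U hU hUj using hjmem
  obtain ⟨ψ, hψ, w, hw, hwlim⟩ := hcpt U hU ⟨2 * (j 0 + B), fun n => by
    have hjn : j n ≤ j 0 := hjanti (Nat.zero_le n)
    linarith [hcoer _ (hU n), hUj n]⟩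
  obtain ⟨θ, hθ, hae, hFlim⟩ :=
    hF.exists_subseq_tendsto (fun n => hlp _ (hU (ψ n))) (hlp w hw) hwlim
  have hElim : Tendsto (fun n => energy a s Ω β (U (ψ (θ n)))) atTop
      (𝓝 (μ₀ + lam * ∫ x in Ω, Ff f x (w x))) := by
    refine ((hjlim.comp (hψ.comp hθ).tendsto_atTop).add (hFlim.const_mul lam)).congr fun n => ?_
    rw [Function.comp_apply, ← hUj, h.Jlam_eq f lam (hU _)]
    exact sub_add_cancel _ _
  obtain ⟨u, hu, huw, hEu⟩ := h.exists_ae_eq_and_energy_le hΩ hne (fun n => hU _) hae hElim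
  have hFu : ∫ x in Ω, Ff f x (u x) = ∫ x in Ω, Ff f x (w x) :=
    integral_congr_ae (huw.mono fun x hx => congrArg (Ff f x) hx)
  have hJu : Jlam a s Ω β f lam u ≤ μ₀ := by
    rw [h.Jlam_eq f lam hu, hFu]
    linarith
  exact ⟨u, hu, isMinOn_iff.2 fun v hv => hJu.trans (csInf_le hbdd (mem_image_of_mem _ hv))⟩

lemma Aform_eq_of_isMinOn {lam : ℝ} {u v : Eucl N → ℝ} (h : IsRobinEnergy a Ω β m p)
    (hF : IsPowerNonlinearity (volume.restrict Ω) (Ff f) f q Q C) (hu : u ∈ h.energySpace s)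
    (hv : v ∈ h.energySpace s) (huq : u ∈ lebesgueClass (volume.restrict Ω) q)
    (hvq : v ∈ lebesgueClass (volume.restrict Ω) q)
    (hmin : IsMinOn (Jlam a s Ω β f lam) (h.energySpace s) u) :
    Aform a s Ω β u v = lam * ∫ x in Ω, f x (u x) * v x := by
  have hmem : ∀ t : ℝ, u + t • v ∈ h.energySpace s := fun t =>
    add_mem hu (Submodule.smul_mem _ t hv)
  have hderiv : HasDerivAt (fun t : ℝ => Jlam a s Ω β f lam (u + t • v))
      (Aform a s Ω β u v - lam * ∫ x in Ω, f x (u x) * v x) 0 := by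
    simp only [h.Jlam_eq f lam (hmem _)]
    exact (h.hasDerivAt_energy hu hv).sub ((hF.hasDerivAt_integral huq hvq).const_mul lam)
  have hlocal : IsLocalMin (fun t : ℝ => Jlam a s Ω β f lam (u + t • v)) 0 :=
    Eventually.of_forall fun t => by
      simpa only [zero_smul, add_zero] using isMinOn_iff.1 hmin _ (hmem t)
  exact sub_eq_zero.1 (hlocal.hasDerivAt_eq_zero hderiv)

lemma not_ae_eq_zero_of_Jlam_neg {lam : ℝ} {u : Eucl N → ℝ} (h : IsRobinEnergy a Ω β m p)
    (hu : u ∈ h.energySpace s) (hneg : Jlam a s Ω β f lam u < 0) :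
    ¬ u =ᵐ[volume] fun _ => (0 : ℝ) := by
  intro hzero
  have hF0 : ∫ x in Ω, Ff f x (u x) = 0 := integral_eq_zero_of_ae <| by
    filter_upwards [ae_restrict_of_ae hzero] with x hx
    rw [hx, Ff, intervalIntegral.integral_same, Pi.zero_apply]
  rw [h.Jlam_eq f lam hu, hF0, mul_zero, sub_zero] at hneg
  exact hneg.not_ge (h.energy_nonneg u)

end IsRobinEnergy

section Nonlinearity

variable {Ω : Set (Eucl N)} {f : Eucl N → ℝ → ℝ} {q : Eucl N → ℝ} {Q c₁ : ℝ}

lemma isPowerNonlinearity_Ff (hΩ : MeasurableSet Ω) (hqm : AEMeasurable q (volume.restrict Ω))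
    (hq : ∀ x ∈ Ω, q x ∈ Icc 1 Q) (hfmeas : ∀ t, Measurable fun x => f x t)
    (hfcont : ∀ x, Continuous (f x)) (hc₁ : 0 ≤ c₁)
    (hf : ∀ x ∈ Ω, ∀ t, |f x t| ≤ c₁ * |t| ^ (q x - 1)) :
    IsPowerNonlinearity (volume.restrict Ω) (Ff f) f q Q c₁ where
  measurable :=
    measurable_uncurry_primitive hfcont (measurable_uncurry_of_continuous hfcont hfmeas)
  measurable_deriv := measurable_uncurry_of_continuous hfcont hfmeas
  hasDerivAt x _ := intervalIntegral.integral_hasDerivAt_right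
    ((hfcont x).intervalIntegrable _ _) ((hfcont x).stronglyMeasurableAtFilter _ _)
    (hfcont x).continuousAt
  map_zero _ := intervalIntegral.integral_same
  aemeasurable_exponent := hqm
  exponent_mem := (ae_restrict_mem hΩ).mono hq
  constant_nonneg := hc₁
  abs_deriv_le := (ae_restrict_mem hΩ).mono hf

lemma IsPowerNonlinearity.setIntegral_Ff_indicator_pos
    (hF : IsPowerNonlinearity (volume.restrict Ω) (Ff f) f q Q c₁) (hΩ : IsOpen Ω)
    (hne : Ω.Nonempty) (hfin : volume Ω ≠ ⊤) (hpos : ∀ x ∈ Ω, 0 < Ff f x 1) :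
    0 < ∫ x in Ω, Ff f x (Ω.indicator (fun _ => 1) x) := by
  have hmem : Ω.indicator (fun _ => (1 : ℝ)) ∈ lebesgueClass (volume.restrict Ω) q := by
    refine ⟨measurable_const.indicator hΩ.measurableSet,
      (integrableOn_const hfin (C := (1 : ℝ))).congr ?_⟩
    filter_upwards [ae_restrict_mem hΩ.measurableSet] with x hx
    rw [indicator_of_mem hx, abs_one, Real.one_rpow]
  have hpos' : ∀ x ∈ Ω, 0 < Ff f x (Ω.indicator (fun _ => 1) x) := fun x hx => by
    rw [indicator_of_mem hx]
    exact hpos x hx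
  rw [setIntegral_pos_iff_support_of_nonneg_ae
    ((ae_restrict_mem hΩ.measurableSet).mono fun x hx => (hpos' x hx).le) (hF.integrable_comp hmem),
    inter_eq_right.2 fun x hx => Function.mem_support.2 (hpos' x hx).ne']
  exact hΩ.measure_pos volume hne

end Nonlinearity

theorem statement15_general
    (N : ℕ) (_hN : 1 ≤ N)
    (Ω : Set (Eucl N)) (hΩo : IsOpen Ω) (hΩne : Ω.Nonempty)
    (s : ℝ)
    (a : Eucl N → Eucl N → ℝ → ℝ)
    (ha : Measurable fun p : Eucl N × Eucl N × ℝ => a p.1 p.2.1 p.2.2)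
    (hmono : ∀ x y, StrictMono (phiF a x y))
    (hcont : ∀ x y, Continuous (phiF a x y))
    (β : Eucl N → ℝ) (hβm : Measurable β)
    (hβ0 : ∀ᵐ x ∂(volume.restrict Ωᶜ), 0 ≤ β x)
    (φm φp : ℝ)
    (hΦ1 : ∀ x y t, 0 < t →
      φm ≤ t * phiF a x y t / PhiF a x y t ∧ t * phiF a x y t / PhiF a x y t ≤ φp)
    (hΦ2 : ∀ x y : Eucl N, ConvexOn ℝ (Set.Ici 0) fun t => PhiF a x y (Real.sqrt t))
    (q : Eucl N → ℝ) (qp : ℝ) (hqm : AEMeasurable q (volume.restrict Ω))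
    (hq : ∀ x ∈ Ω, q x ∈ Icc 1 qp)
    (f : Eucl N → ℝ → ℝ)
    (hfmeas : ∀ t : ℝ, Measurable fun x => f x t)
    (hfcont : ∀ x : Eucl N, Continuous fun t => f x t)
    (c₁ : ℝ) (hc₁ : 0 ≤ c₁)
    (hf1 : ∀ x ∈ Ω, ∀ t : ℝ, |f x t| ≤ c₁ * |t| ^ (q x - 1))
    (hqpφ : qp < φm)
    (c : ℝ) (hc : 0 ≤ c)
    (hemb : ∀ u ∈ XsetM a s Ω β, normq Ω q u ≤ ENNReal.ofReal c * normM a s Ω β u)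
    (hcpt : ∀ un : ℕ → Eucl N → ℝ, (∀ n, un n ∈ XsetM a s Ω β) →
      (∃ B : ℝ, ∀ n, normM a s Ω β (un n) ≤ ENNReal.ofReal B) →
      ∃ ns : ℕ → ℕ, StrictMono ns ∧ ∃ w ∈ XsetM a s Ω β,
        Tendsto (fun k => ∫ x in Ω, |un (ns k) x - w x| ^ q x) atTop (nhds 0))
    (w : Eucl N → ℝ) (hw : w ∈ XsetM a s Ω β) (hwpos : 0 < ∫ x in Ω, Ff f x (w x)) :
    ∃ lamstar : ℝ, 0 < lamstar ∧ ∀ lam : ℝ, lamstar ≤ lam →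
      ∃ u ∈ XsetM a s Ω β, ¬ (u =ᵐ[volume] (fun _ => (0:ℝ))) ∧
        Jlam a s Ω β f lam u < 0 ∧
        ∀ v ∈ XsetM a s Ω β, Aform a s Ω β u v = lam * ∫ x in Ω, f x (u x) * v x := by
  have h : IsRobinEnergy a Ω β φm φp :=
    ⟨isMusielakOrlicz_energyDensity ha hmono hcont hΦ1 hΦ2, hβm, hβ0⟩
  have hF := isPowerNonlinearity_Ff hΩo.measurableSet hqm hq hfmeas hfcont hc₁ hf1
  have hqp : 0 ≤ qp := hΩne.elim fun x hx => zero_le_one.trans ((hq x hx).1.trans (hq x hx).2)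
  have hφm : 0 < φm := hqp.trans_lt hqpφ
  rw [h.XsetM_eq hφm] at hemb hcpt hw ⊢
  have hlp := fun u hu => h.mem_lebesgueClass_and_integral_le hφm hΩo.measurableSet hqm
    (fun x hx => ⟨zero_le_one.trans (hq x hx).1, (hq x hx).2⟩) hc hu (hemb u hu)
  have hE := h.energy_nonneg (s := s) w
  refine ⟨energy a s Ω β w / (∫ x in Ω, Ff f x (w x)) + 1, by positivity, fun lam hlam => ?_⟩
  obtain ⟨B, hB⟩ := h.exists_forall_half_energy_sub_le_Jlam hF (by positivity) (by positivity)
    ((div_lt_one hφm).2 hqpφ) (le_trans (by positivity) hlam) hlp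
  obtain ⟨u, hu, hmin⟩ := h.exists_isMinOn_Jlam hF hΩo hΩne (fun u hu => (hlp u hu).1) hB
    fun U hU hbdd => hcpt U hU (h.exists_normM_le hφm hU hbdd)
  have hwneg : Jlam a s Ω β f lam w < 0 := by
    rw [h.Jlam_eq f lam hw, sub_neg, ← div_lt_iff₀ hwpos]
    exact (lt_add_one _).trans_le hlam
  have hneg : Jlam a s Ω β f lam u < 0 := (isMinOn_iff.1 hmin w hw).trans_lt hwneg
  exact ⟨u, hu, h.not_ae_eq_zero_of_Jlam_neg hu hneg, hneg, fun v hv =>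
    h.Aform_eq_of_isMinOn hF hu hv (hlp u hu).1 (hlp v hv).1 hmin⟩

/-- existence of a nontrivial weak solution of the Neumann–Robin problem
for every large `λ`. -/
theorem statement15
    (N : ℕ) (hN : 1 ≤ N)
    (Ω : Set (Eucl N)) (hΩo : IsOpen Ω) (hΩb : Bornology.IsBounded Ω) (hΩne : Ω.Nonempty)
    (s : ℝ) (hs : s ∈ Set.Ioo (0:ℝ) 1)
    (a : Eucl N → Eucl N → ℝ → ℝ)
    (ha : Measurable fun p : Eucl N × Eucl N × ℝ => a p.1 p.2.1 p.2.2)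
    (hmono : ∀ x y, StrictMono (phiF a x y))
    (hcont : ∀ x y, Continuous (phiF a x y))
    (hsurj : ∀ x y, Function.Surjective (phiF a x y))
    (β : Eucl N → ℝ) (hβm : Measurable β)
    (hβb : ∃ C : ℝ, ∀ᵐ x ∂(volume.restrict Ωᶜ), |β x| ≤ C)
    (hβ0 : ∀ᵐ x ∂(volume.restrict Ωᶜ), 0 ≤ β x)
    (φm φp : ℝ) (hφm : 1 < φm) (hφmp : φm ≤ φp)
    (hΦ1 : ∀ x y t, 0 < t →
      φm ≤ t * phiF a x y t / PhiF a x y t ∧ t * phiF a x y t / PhiF a x y t ≤ φp)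
    (hΦ2 : ∀ x y : Eucl N, ConvexOn ℝ (Set.Ici 0) fun t => PhiF a x y (Real.sqrt t))
    (hΦ3 : ∃ C : ℝ, ∀ x y : Eucl N, PhiF a x y 1 ≤ C)
    (hsym : ∀ x y t, a x y t = a y x t)
    (q : Eucl N → ℝ) (hqc : ContinuousOn q (closure Ω)) (hq1 : ∀ x ∈ closure Ω, 1 < q x)
    (qp : ℝ) (hqp_le : ∀ x ∈ closure Ω, q x ≤ qp)
    (f : Eucl N → ℝ → ℝ)
    (hfmeas : ∀ t : ℝ, Measurable fun x => f x t)
    (hfcont : ∀ x : Eucl N, Continuous fun t => f x t)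
    (c₁ c₂ : ℝ) (hc₁ : 0 < c₁) (hc₂ : 0 < c₂)
    (hf1 : ∀ x ∈ Ω, ∀ t : ℝ, |f x t| ≤ c₁ * |t| ^ (q x - 1))
    (hf2 : ∀ x ∈ Ω, ∀ t : ℝ, c₂ * |t| ^ q x ≤ Ff f x t)
    (hqpφ : qp < φm)
    (c : ℝ) (hc : 0 < c)
    (hemb : ∀ u ∈ XsetM a s Ω β, normq Ω q u ≤ ENNReal.ofReal c * normM a s Ω β u)
    (hcpt : ∀ un : ℕ → Eucl N → ℝ, (∀ n, un n ∈ XsetM a s Ω β) →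
      (∃ B : ℝ, ∀ n, normM a s Ω β (un n) ≤ ENNReal.ofReal B) →
      ∃ ns : ℕ → ℕ, StrictMono ns ∧ ∃ w ∈ XsetM a s Ω β,
        Tendsto (fun k => ∫ x in Ω, |un (ns k) x - w x| ^ q x) atTop (nhds 0))
    (hind : (Ω.indicator fun _ => (1:ℝ)) ∈ XsetM a s Ω β) :
    ∃ lamstar : ℝ, 0 < lamstar ∧ ∀ lam : ℝ, lamstar ≤ lam →
      ∃ u ∈ XsetM a s Ω β, ¬ (u =ᵐ[volume] (fun _ => (0:ℝ))) ∧
        Jlam a s Ω β f lam u < 0 ∧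
        ∀ v ∈ XsetM a s Ω β, Aform a s Ω β u v = lam * ∫ x in Ω, f x (u x) * v x := by
  have hqm : AEMeasurable q (volume.restrict Ω) :=
    (hqc.mono subset_closure).aemeasurable hΩo.measurableSet
  have hq : ∀ x ∈ Ω, q x ∈ Icc 1 qp := fun x hx =>
    ⟨(hq1 x (subset_closure hx)).le, hqp_le x (subset_closure hx)⟩
  have hpos := (isPowerNonlinearity_Ff hΩo.measurableSet hqm hq hfmeas hfcont hc₁.le
    hf1).setIntegral_Ff_indicator_pos hΩo hΩne hΩb.measure_lt_top.ne fun x hx =>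
      hc₂.trans_le (by simpa only [abs_one, Real.one_rpow, mul_one] using hf2 x hx 1)
  exact statement15_general N hN Ω hΩo hΩne s a ha hmono hcont β hβm hβ0 φm φp hΦ1 hΦ2 q qp hqm hq
    f hfmeas hfcont c₁ hc₁.le hf1 hqpφ c hc.le hemb hcpt _ hind hpos
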